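/- arXiv:1802.10262 — 2 statements merged into one kernel-verified Lean document; each statement's English description precedes it below -/
import Mathlib

section
/- For every positive integer a, the product of all primes p with p ≤ a is strictly greater than 2^(a-3). -/
/-!
Write `θ` and `ψ` for the Chebyshev functions, so that `log a# = θ a`; the claim reads
`(a - 3) log 2 < θ a`. The estimate coming from the central binomial coefficient only has the
constant `log 2` itself, with a negative error term, so it is not enough. The proof uses
Chebyshev's sharper combination of factorials
`log a! + log ⌊a/30⌋! - log ⌊a/2⌋! - log ⌊a/3⌋! - log ⌊a/5⌋!`.
As `log n! = ∑ d, Λ d * ⌊n / d⌋`, it equals `∑ d ≤ a, Λ d * c (⌊a / d⌋)` with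
`c m = m + ⌊m/30⌋ - ⌊m/2⌋ - ⌊m/3⌋ - ⌊m/5⌋ ≤ 1`, hence is at most `ψ a`
(`factorial_comb_le_psi`). Elementary Stirling bounds then give `ψ a ≥ A a - 4 log a - 1` with
`A = log 2 / 2 + log 3 / 3 + log 5 / 5 - log 30 / 30 ≥ 1.3 log 2` (`psi_lower`).

Prime powers contribute little: `ψ a - θ a ≤ π(√a) log a` (`psi_le_theta_add`) and
`π(s) ≤ s / 3 + 3`. This settles `a ≥ 512` (`two_pow_lt_of_large`). For smaller `a` the inequality
is computed at a few checkpoints `b`, each of which covers an interval `b ≤ a ≤ c` because the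
primorial is monotone (`two_pow_lt_of_window`).
-/

open Finset Real
open scoped Nat.Prime ArithmeticFunction.vonMangoldt

namespace PrimorialBound

/-! ### Factorials and the function `ψ` -/

lemma log_factorial_eq_sum (n : ℕ) :
    log (n.factorial : ℝ) = ∑ d ∈ Ioc 0 n, Λ d * ((n / d : ℕ) : ℝ) := by
  rw [← ArithmeticFunction.sum_Ioc_mul_zeta_eq_sum, ArithmeticFunction.vonMangoldt_mul_zeta]
  induction n with
  | zero => simp
  | succ n ih =>
    rw [Finset.sum_Ioc_succ_top (Nat.zero_le n), ← ih, Nat.factorial_succ, Nat.cast_mul,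
      log_mul (by positivity) (by positivity), ArithmeticFunction.log_apply]
    ring

/-- The range of summation may be taken independent of `k`, since the additional terms vanish. -/
lemma log_factorial_div_eq_sum (a k : ℕ) :
    log ((a / k).factorial : ℝ) = ∑ d ∈ Ioc 0 a, Λ d * ((a / d / k : ℕ) : ℝ) := by
  rw [log_factorial_eq_sum]
  have hsub : Ioc 0 (a / k) ⊆ Ioc 0 a := Ioc_subset_Ioc_right (Nat.div_le_self a k)
  rw [← sum_subset hsub]
  · refine sum_congr rfl fun d _ => ?_
    rw [Nat.div_div_eq_div_mul, Nat.div_div_eq_div_mul, mul_comm k d, mul_comm]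
  · intro d _ hd'
    have hlt : a / k < d := by simp_all
    rw [Nat.div_div_eq_div_mul, mul_comm d k, ← Nat.div_div_eq_div_mul, Nat.div_eq_of_lt hlt]
    simp

lemma factorial_comb_le_psi (a : ℕ) :
    log (a.factorial : ℝ) + log ((a / 30).factorial : ℝ)
      ≤ Chebyshev.psi a + log ((a / 2).factorial : ℝ) + log ((a / 3).factorial : ℝ)
        + log ((a / 5).factorial : ℝ) := by
  rw [log_factorial_eq_sum a, log_factorial_div_eq_sum a 30, log_factorial_div_eq_sum a 2,
    log_factorial_div_eq_sum a 3, log_factorial_div_eq_sum a 5, Chebyshev.psi, Nat.floor_natCast,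
    ← sum_add_distrib, ← sum_add_distrib, ← sum_add_distrib, ← sum_add_distrib]
  refine sum_le_sum fun d _ => ?_
  have hc : a / d + a / d / 30 ≤ 1 + a / d / 2 + a / d / 3 + a / d / 5 := by omega
  have hc' : ((a / d : ℕ) : ℝ) + ((a / d / 30 : ℕ) : ℝ)
      ≤ 1 + ((a / d / 2 : ℕ) : ℝ) + ((a / d / 3 : ℕ) : ℝ) + ((a / d / 5 : ℕ) : ℝ) := by
    exact_mod_cast hc
  nlinarith [mul_le_mul_of_nonneg_left hc' (ArithmeticFunction.vonMangoldt_nonneg (n := d))]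

/-! ### Elementary Stirling bounds -/

lemma sub_le_mul_log_sub_log {x y : ℝ} (hx : 0 < x) (hy : 0 < y) :
    x - y ≤ x * (log x - log y) := by
  have h := log_le_sub_one_of_pos (div_pos hy hx)
  rw [log_div hy.ne' hx.ne'] at h
  have h2 : x * (y / x) = y := by field_simp
  nlinarith [mul_le_mul_of_nonneg_left h hx.le]

lemma le_log_factorial {n : ℕ} (hn : 1 ≤ n) :
    n * log n - n + 1 ≤ log (n.factorial : ℝ) := by
  induction n, hn using Nat.le_induction with
  | base => simp
  | succ n hn ih =>
    have hn0 : (0 : ℝ) < n := by exact_mod_cast hn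
    rw [Nat.factorial_succ, Nat.cast_mul, log_mul (by positivity) (by positivity)]
    have h := sub_le_mul_log_sub_log hn0 (by positivity : (0 : ℝ) < n + 1)
    push_cast
    linarith

lemma log_factorial_le {n : ℕ} (hn : 1 ≤ n) :
    log (n.factorial : ℝ) ≤ n * log n - n + 1 + log n := by
  induction n, hn using Nat.le_induction with
  | base => simp
  | succ n hn ih =>
    have hn0 : (0 : ℝ) < n := by exact_mod_cast hn
    rw [Nat.factorial_succ, Nat.cast_mul, log_mul (by positivity) (by positivity)]
    have h := sub_le_mul_log_sub_log (by positivity : (0 : ℝ) < n + 1) hn0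
    push_cast
    linarith

/-- `x log x - x` is monotone on `[1, ∞)`. -/
lemma mul_log_sub_mono {x y : ℝ} (hx : 1 ≤ x) (hxy : x ≤ y) :
    x * log x - x ≤ y * log y - y := by
  have h := sub_le_mul_log_sub_log (by linarith : 0 < y) (by linarith : 0 < x)
  nlinarith [mul_nonneg (sub_nonneg.2 hxy) (log_nonneg hx)]

lemma log_factorial_div_le {a k : ℕ} (hk : 0 < k) (hka : k ≤ a) :
    log ((a / k).factorial : ℝ)
      ≤ (a / k : ℝ) * (log a - log k) - a / k + 1 + log a := by
  have hk0 : (0 : ℝ) < k := by exact_mod_cast hk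
  have ha0 : (0 : ℝ) < a := by exact_mod_cast hk.trans_le hka
  have h1 : 1 ≤ a / k := Nat.div_pos hka hk
  have h1' : (1 : ℝ) ≤ ((a / k : ℕ) : ℝ) := by exact_mod_cast h1
  have h2 : ((a / k : ℕ) : ℝ) ≤ (a : ℝ) / k := Nat.cast_div_le
  have h3 := mul_log_sub_mono h1' h2
  have h4 : log ((a / k : ℕ) : ℝ) ≤ log a :=
    log_le_log (by linarith) (by exact_mod_cast Nat.div_le_self a k)
  rw [log_div ha0.ne' hk0.ne'] at h3
  linarith [log_factorial_le h1]

/-- The Stirling bound is applied to `(⌊a/k⌋ + 1)!`, as `⌊a/k⌋ + 1 ≥ a / k`. -/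
lemma le_log_factorial_div {a k : ℕ} (hk : 2 ≤ k) (hka : k ≤ a) :
    (a / k : ℝ) * (log a - log k) - a / k + 1 - log a ≤ log ((a / k).factorial : ℝ) := by
  have hk0 : (0 : ℝ) < k := by exact_mod_cast (by omega : 0 < k)
  have ha0 : (0 : ℝ) < a := by exact_mod_cast (by omega : 0 < a)
  have h1 : (1 : ℝ) ≤ (a : ℝ) / k := by
    rw [one_le_div hk0]; exact_mod_cast hka
  have h2 : (a : ℝ) / k ≤ ((a / k + 1 : ℕ) : ℝ) := by
    rw [div_le_iff₀ hk0]
    exact_mod_cast (Nat.lt_mul_of_div_lt (Nat.lt_succ_self (a / k)) (by omega)).le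
  have h3 := mul_log_sub_mono h1 h2
  have h4 : log ((a / k + 1 : ℕ) : ℝ) ≤ log a :=
    log_le_log (by positivity)
      (by exact_mod_cast Nat.div_lt_self (by omega : 0 < a) (by omega : 1 < k))
  have h5 := le_log_factorial (Nat.le_add_left 1 (a / k))
  rw [Nat.factorial_succ, Nat.cast_mul, log_mul (by positivity) (by positivity)] at h5
  rw [log_div ha0.ne' hk0.ne'] at h3
  linarith

/-- The main terms `x log x - x` cancel since `1 + 1/30 = 1/2 + 1/3 + 1/5`; what remains is
`A a - 4 log a - 1`, where `A - 1.3 log 2 = (9 log 3 + 5 log 5 - 25 log 2) / 30 ≥ 0`. -/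
lemma psi_lower {a : ℕ} (ha : 30 ≤ a) :
    1.3 * log 2 * a - 4 * log a - 1 ≤ Chebyshev.psi a := by
  have h := factorial_comb_le_psi a
  have h1 := le_log_factorial (by omega : 1 ≤ a)
  have h30 := le_log_factorial_div (by norm_num : 2 ≤ 30) ha
  have h2 := log_factorial_div_le (by norm_num : 0 < 2) (by omega : 2 ≤ a)
  have h3 := log_factorial_div_le (by norm_num : 0 < 3) (by omega : 3 ≤ a)
  have h5 := log_factorial_div_le (by norm_num : 0 < 5) (by omega : 5 ≤ a)
  push_cast at h30 h2 h3 h5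
  have e30 : log (30 : ℝ) = log 2 + log 3 + log 5 := by
    rw [← log_mul (by norm_num) (by norm_num), ← log_mul (by norm_num) (by norm_num)]
    norm_num
  have key : 25 * log 2 ≤ 9 * log 3 + 5 * log (5 : ℝ) := by
    have : log ((2 : ℝ) ^ 25) ≤ log ((3 : ℝ) ^ 9 * (5 : ℝ) ^ 5) :=
      log_le_log (by norm_num) (by norm_num)
    rw [log_mul (by norm_num) (by norm_num), log_pow, log_pow, log_pow] at this
    exact_mod_cast this
  rw [e30] at h30
  have hkey := mul_le_mul_of_nonneg_left key (Nat.cast_nonneg (α := ℝ) a)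
  linarith

/-! ### From `ψ` to `θ` -/

lemma psi_le_theta_add {a : ℕ} (ha : 1 ≤ a) :
    Chebyshev.psi a ≤ Chebyshev.theta a + π (Nat.sqrt a) * log a := by
  have ha' : a ≠ 0 := by omega
  have hlog : 0 ≤ log (a : ℝ) := log_natCast_nonneg a
  have hsub : Nat.primesLE (Nat.sqrt a) ⊆ Nat.primesLE a :=
    Nat.primesLE_mono (Nat.sqrt_le_self a)
  rw [Chebyshev.psi_eq_sum_mul_log_prime, Chebyshev.theta_eq_sum_primesLE_log,
    ← Nat.primesLE_card_eq_primeCounting, ← nsmul_eq_mul, ← sum_const,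
    ← sum_sdiff hsub, ← sum_sdiff hsub (f := fun p : ℕ => log (p : ℝ)), add_assoc]
  refine add_le_add (sum_le_sum fun p hp => ?_) ?_
  · -- For `√a < p` no power of `p` beyond the first is at most `a`.
    simp only [mem_sdiff, Nat.mem_primesLE, not_and] at hp
    have hlt : Nat.sqrt a < p := by
      by_contra hcon
      exact hp.2 (not_lt.1 hcon) hp.1.2
    have h2 : Nat.log p a < 2 :=
      Nat.log_lt_of_lt_pow ha' (by rw [pow_two]; exact Nat.sqrt_lt.1 hlt)
    have h3 : (Nat.log p a : ℝ) ≤ 1 := by exact_mod_cast Nat.lt_succ_iff.1 h2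
    exact mul_le_of_le_one_left (log_natCast_nonneg p) h3
  · rw [← sum_add_distrib]
    refine sum_le_sum fun p hp => ?_
    have hp' := Nat.prime_of_mem_primesLE hp
    have h1 : ((p ^ Nat.log p a : ℕ) : ℝ) ≤ a := by exact_mod_cast Nat.pow_log_le_self p ha'
    have h2 := log_le_log (by exact_mod_cast pow_pos hp'.pos _) h1
    rw [Nat.cast_pow, log_pow] at h2
    linarith [log_natCast_nonneg p]

/-- Primes larger than `6` are coprime to `6`, so their density is at most `1 / 3`. -/
lemma primeCounting_le {s : ℕ} (hs : 6 ≤ s) : (π s : ℝ) ≤ s / 3 + 3 := by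
  have h := Nat.primeCounting_add_le (by norm_num : 6 ≠ 0) le_rfl (s - 6)
  have e1 : π 6 = 3 := by decide
  have e2 : Nat.totient 6 = 2 := by decide
  rw [e1, e2, Nat.add_sub_cancel' hs] at h
  have h' : 3 * π s ≤ s + 9 := by omega
  have h'' : 3 * (π s : ℝ) ≤ s + 9 := by exact_mod_cast h'
  linarith

lemma two_pow_lt_of_large {a : ℕ} (ha : 512 ≤ a) : 2 ^ a < 8 * primorial a := by
  have hψ := psi_lower (by omega : 30 ≤ a)
  have hθ := psi_le_theta_add (by omega : 1 ≤ a)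
  have hs6 : 6 ≤ Nat.sqrt a := Nat.le_sqrt.2 (by omega)
  have hπ := primeCounting_le hs6
  have ha' : (512 : ℝ) ≤ a := by exact_mod_cast ha
  obtain ⟨y, hy0, hy⟩ : ∃ y : ℝ, 0 ≤ y ∧ y ^ 2 = a :=
    ⟨√a, sqrt_nonneg _, sq_sqrt (by linarith)⟩
  have hsy : (Nat.sqrt a : ℝ) ≤ y := by
    have h : ((Nat.sqrt a : ℕ) : ℝ) ^ 2 ≤ y ^ 2 := by
      rw [hy]; exact_mod_cast Nat.sqrt_le' a
    exact le_of_sq_le_sq h hy0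
  have hy22 : 22.5 ≤ y := by nlinarith
  -- The logarithm lies below its tangent at `32`.
  have hlog : log a ≤ 2 * (y / 32 + 5 * log 2 - 1) := by
    have h := log_le_sub_one_of_pos (by positivity : 0 < y / 32)
    rw [log_div (by positivity) (by norm_num), show (32 : ℝ) = 2 ^ 5 by norm_num, log_pow] at h
    rw [← hy, log_pow]
    push_cast at h ⊢
    linarith
  have hl1 := log_two_gt_d9
  have hl2 := log_two_lt_d9
  have hlog' : log a ≤ y / 16 + 4.932 := by linarith
  have hlog0 : 0 ≤ log (a : ℝ) := log_natCast_nonneg a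
  have hprod : (π (Nat.sqrt a) : ℝ) * log a ≤ (y / 3 + 3) * (y / 16 + 4.932) := by
    gcongr
    linarith
  have hmain : (a : ℝ) * log 2 < Chebyshev.theta a := by
    have : 0.2079 * y ^ 2 ≤ 0.3 * log 2 * a := by rw [hy]; nlinarith
    nlinarith
  rw [Chebyshev.theta_eq_log_primorial, Nat.floor_natCast, ← log_pow] at hmain
  have hlt := (log_lt_log_iff (by positivity)
    (by exact_mod_cast primorial_pos a)).1 hmain
  have hlt' : 2 ^ a < primorial a := by exact_mod_cast hlt
  omega

/-! ### Small values -/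

/-- A number in `(31, 1368]` coprime to `31# = 200560490130` is prime, since its least prime
factor is at least `37` and `37 ^ 2 = 1369`. This makes primality in this range a single
gcd computation. -/
lemma prime_of_coprime {p : ℕ} (h1 : 31 < p) (h2 : p < 1369)
    (h : Nat.Coprime p 200560490130) : p.Prime := by
  have e : primorial 31 = 200560490130 := by decide +kernel
  rw [← e] at h
  by_contra hp
  have hq : p.minFac.Prime := Nat.minFac_prime (by omega)
  have hsq : p.minFac ^ 2 ≤ p := Nat.minFac_sq_le_self (by omega) hp
  have hlt : p.minFac < 37 := by nlinarith
  have hle : p.minFac ≤ 31 := by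
    by_contra hcon
    generalize p.minFac = q at *
    interval_cases q <;> revert hq <;> norm_num
  have := Nat.Coprime.coprime_dvd_left (Nat.minFac_dvd p) h
  exact (Nat.Prime.coprime_iff_not_dvd hq).1 this (hq.dvd_primorial_iff.2 hle)

/-- Equality holds in fact, but only this direction is needed for lower bounds. -/
lemma prod_le_primorial {b : ℕ} (h31 : 31 ≤ b) (hb : b < 1369) :
    200560490130 * ∏ p ∈ Ioc 31 b with Nat.Coprime p 200560490130, p ≤ primorial b := by
  have e : primorial 31 = 200560490130 := by decide +kernel
  nth_rewrite 1 [← e]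
  rw [primorial, ← prod_union]
  · refine prod_le_prod_of_subset_of_one_le' ?_ ?_
    · intro p hp
      simp only [mem_union, mem_filter, mem_range, mem_Ioc] at hp ⊢
      rcases hp with hp | hp
      · exact ⟨by omega, hp.2⟩
      · exact ⟨by omega, prime_of_coprime hp.1.1 (by omega) hp.2⟩
    · intro p hp _
      exact (mem_filter.1 hp).2.one_le
  · rw [disjoint_left]
    intro p hp hp'
    simp only [mem_filter, mem_range, mem_Ioc] at hp hp'
    omega

lemma two_pow_lt_of_window {a : ℕ} (b c : ℕ) (h31 : 31 ≤ b) (hb : b < 1369) (hba : b ≤ a)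
    (hac : a ≤ c)
    (h : 2 ^ c < 8 * (200560490130 *
      ∏ p ∈ Ioc 31 b with Nat.Coprime p 200560490130, p)) :
    2 ^ a < 8 * primorial a :=
  calc 2 ^ a ≤ 2 ^ c := Nat.pow_le_pow_right (by norm_num) hac
    _ < _ := h
    _ ≤ 8 * primorial b := Nat.mul_le_mul_left 8 (prod_le_primorial h31 hb)
    _ ≤ 8 * primorial a := Nat.mul_le_mul_left 8 (primorial_mono hba)

/-- Except for the last window, which stops at `511`, `c` is the largest exponent with
`2 ^ c < 8 * b#`, and the next window starts at `c + 1`. -/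
lemma two_pow_lt_of_small {a : ℕ} (h1 : 31 ≤ a) (h2 : a < 512) : 2 ^ a < 8 * primorial a := by
  rcases le_or_gt a 40 with h | h
  · exact two_pow_lt_of_window 31 40 (by norm_num) (by norm_num) (by omega) h
      (by decide +kernel)
  rcases le_or_gt a 51 with h | h
  · exact two_pow_lt_of_window 41 51 (by norm_num) (by norm_num) (by omega) h
      (by decide +kernel)
  rcases le_or_gt a 62 with h | h
  · exact two_pow_lt_of_window 52 62 (by norm_num) (by norm_num) (by omega) h
      (by decide +kernel)
  rcases le_or_gt a 79 with h | h
  · exact two_pow_lt_of_window 63 79 (by norm_num) (by norm_num) (by omega) h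
      (by decide +kernel)
  rcases le_or_gt a 104 with h | h
  · exact two_pow_lt_of_window 80 104 (by norm_num) (by norm_num) (by omega) h
      (by decide +kernel)
  rcases le_or_gt a 137 with h | h
  · exact two_pow_lt_of_window 105 137 (by norm_num) (by norm_num) (by omega) h
      (by decide +kernel)
  rcases le_or_gt a 178 with h | h
  · exact two_pow_lt_of_window 138 178 (by norm_num) (by norm_num) (by omega) h
      (by decide +kernel)
  rcases le_or_gt a 237 with h | h
  · exact two_pow_lt_of_window 179 237 (by norm_num) (by norm_num) (by omega) h
      (by decide +kernel)
  rcases le_or_gt a 314 with h | h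
  · exact two_pow_lt_of_window 238 314 (by norm_num) (by norm_num) (by omega) h
      (by decide +kernel)
  rcases le_or_gt a 427 with h | h
  · exact two_pow_lt_of_window 315 427 (by norm_num) (by norm_num) (by omega) h
      (by decide +kernel)
  exact two_pow_lt_of_window 428 511 (by norm_num) (by norm_num) (by omega) (by omega)
    (by decide +kernel)

lemma two_pow_lt (a : ℕ) (ha : 0 < a) : 2 ^ a < 8 * primorial a := by
  rcases lt_or_ge a 31 with h | h
  · have hsmall : ∀ b < 31, 0 < b → 2 ^ b < 8 * primorial b := by decide +kernel
    exact hsmall a h ha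
  rcases lt_or_ge a 512 with h' | h'
  · exact two_pow_lt_of_small h h'
  · exact two_pow_lt_of_large h'

end PrimorialBound

theorem product_of_primes_gt (a : ℕ) (ha : 0 < a) :
    (2 : ℝ) ^ ((a : ℤ) - 3) <
      ∏ p ∈ Finset.filter Nat.Prime (Finset.range (a + 1)), (p : ℝ) := by
  have h : ((2 ^ a : ℕ) : ℝ) < ((8 * primorial a : ℕ) : ℝ) :=
    Nat.cast_lt.2 (PrimorialBound.two_pow_lt a ha)
  rw [primorial] at h
  push_cast at h
  rw [zpow_sub₀ (by norm_num), zpow_natCast, div_lt_iff₀ (by norm_num)]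
  norm_num
  linarith
end

section
/- Let f_1, …, f_s ∈ ℤ[x_1, …, x_t] be polynomials sharing a common zero in ℂ^t. If p is a prime such that the images of f_1, …, f_s in GF(p)[x_1, …, x_t] generate the unit ideal, then a certain integer determinant D (an (r+1)×(r+1) minor of an augmented coefficient matrix with entries bounded by the maximal height H of the f_i) vanishes modulo p; consequently, if p exceeds H^L · L^(L/2), where L = s·C(d^t + t, t) and d bounds the total degrees, then the images of f_1, …, f_s in GF(p)[x_1, …, x_t] do not generate the unit ideal, i.e., they have a common zero in an algebraic closure of GF(p). -/
/-!
Let `f` have a zero in characteristic zero. Among all zeros of `f` in all fields, one takes a zero `ξ`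
with as many coordinates as possible algebraically independent over `ℤ`, say those in `J`, and regards
it in a large algebraically closed field `Ω`. By maximality `ξ` is isolated in the slice of the zero
set where the coordinates in `J` are fixed (`isolated_of_max`). Hence it is an isolated zero of a
square system that consists of the equations `x i = ξ i` for `i ∈ J` and of combinations
`∑ Y ^ j * f j` with independent transcendental `Y` (`exists_generic_combinations`). The coefficients of
the square system lie in a polynomial ring `ℤ[z]` embedded in `Ω`.

An isolated zero of a square system `g` lies on a branch of the perturbed system
`ε * x i ^ d + g i = 0` along which `ε` is not identically zero (`exists_branch`, by Krull's height
theorem). The perturbed system has a determinant, polynomial in `ε` and `T`, that vanishes at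
`T = x j` and is nonzero because it becomes a characteristic polynomial for `T = ε`. Dividing by a power
of `ε` and passing to `ε = 0`, one finds a nonzero `F ∈ ℤ[z][T]` with `F (ξ j) = 0` whose integer
coefficients are bounded by the product of the row sums of the matrix (`exists_relation`). The
matrix is indexed by monomials of degree at most `t * (d - 1) + 1 ≤ d ^ t`, which leads to the bound
`H ^ L * √L ^ L` when `s ≥ 2` (`bound_le`).

For `p` larger than this bound the leading coefficient of `F` is not divisible by `p`. So the
coordinates of `ξ` are integral over the local ring of `ℤ[z]` at `(p)` and belong to a valuation ring
dominating it. The residues of the coordinates are a common zero of `f` in characteristic `p`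
(`span_ne_top_of_relations`), and the Nullstellensatz gives one over the algebraic closure of `ZMod p`.

The case `s = 1` is direct: a nonconstant polynomial with coefficients smaller than `p` remains
nonconstant modulo `p`.
-/

section
open MvPolynomial

/-! ### The sum of absolute values of coefficients -/

section coeffNorm

/-- The sum of the absolute values of the coefficients of an integer polynomial. It is
submultiplicative, and it bounds every single coefficient. -/
def coeffNorm {σ : Type*} (F : MvPolynomial σ ℤ) : ℕ := ∑ m ∈ F.support, (F.coeff m).natAbs

variable {σ : Type*}

theorem coeffNorm_eq_of_subset (F : MvPolynomial σ ℤ) (S : Finset (σ →₀ ℕ)) (h : F.support ⊆ S) :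
    coeffNorm F = ∑ m ∈ S, (F.coeff m).natAbs := by
  refine Finset.sum_subset h fun m _ hm => ?_
  simp [MvPolynomial.notMem_support_iff.mp hm]

theorem natAbs_coeff_le_coeffNorm (F : MvPolynomial σ ℤ) (m : σ →₀ ℕ) :
    (F.coeff m).natAbs ≤ coeffNorm F := by
  by_cases hm : m ∈ F.support
  · exact Finset.single_le_sum (f := fun m => (F.coeff m).natAbs) (fun _ _ => Nat.zero_le _) hm
  · simp [MvPolynomial.notMem_support_iff.mp hm]

theorem coeffNorm_add_le (F G : MvPolynomial σ ℤ) :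
    coeffNorm (F + G) ≤ coeffNorm F + coeffNorm G := by
  classical
  rw [coeffNorm_eq_of_subset (F + G) (F.support ∪ G.support) MvPolynomial.support_add,
    coeffNorm_eq_of_subset F (F.support ∪ G.support) Finset.subset_union_left,
    coeffNorm_eq_of_subset G (F.support ∪ G.support) Finset.subset_union_right,
    ← Finset.sum_add_distrib]
  exact Finset.sum_le_sum fun m _ => by simpa using Int.natAbs_add_le _ _

@[simp] theorem coeffNorm_zero : coeffNorm (0 : MvPolynomial σ ℤ) = 0 := by simp [coeffNorm]

@[simp] theorem coeffNorm_monomial (m : σ →₀ ℕ) (c : ℤ) :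
    coeffNorm (monomial m c) = c.natAbs := by
  classical
  rw [coeffNorm_eq_of_subset _ {m} MvPolynomial.support_monomial_subset]
  simp

@[simp] theorem coeffNorm_neg (F : MvPolynomial σ ℤ) : coeffNorm (-F) = coeffNorm F := by
  simp [coeffNorm]

@[simp] theorem coeffNorm_C (c : ℤ) : coeffNorm (C c : MvPolynomial σ ℤ) = c.natAbs :=
  coeffNorm_monomial 0 c

@[simp] theorem coeffNorm_one : coeffNorm (1 : MvPolynomial σ ℤ) = 1 := coeffNorm_C 1

@[simp] theorem coeffNorm_X (i : σ) : coeffNorm (X i : MvPolynomial σ ℤ) = 1 :=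
  coeffNorm_monomial _ 1

theorem coeffNorm_sum_le {ι : Type*} (S : Finset ι) (F : ι → MvPolynomial σ ℤ) :
    coeffNorm (∑ i ∈ S, F i) ≤ ∑ i ∈ S, coeffNorm (F i) :=
  Finset.le_sum_of_subadditive _ coeffNorm_zero.le coeffNorm_add_le _ _

theorem coeffNorm_mul_le (F G : MvPolynomial σ ℤ) :
    coeffNorm (F * G) ≤ coeffNorm F * coeffNorm G := by
  have h : F * G = ∑ m ∈ F.support, ∑ n ∈ G.support,
      monomial (m + n) (F.coeff m * G.coeff n) := by
    conv_lhs => rw [F.as_sum, G.as_sum, Finset.sum_mul_sum]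
    simp [monomial_mul]
  have h2 : coeffNorm F * coeffNorm G = ∑ m ∈ F.support, ∑ n ∈ G.support,
      (F.coeff m).natAbs * (G.coeff n).natAbs := Finset.sum_mul_sum _ _ _ _
  rw [h, h2]
  refine (coeffNorm_sum_le _ _).trans (Finset.sum_le_sum fun m _ => ?_)
  refine (coeffNorm_sum_le _ _).trans (Finset.sum_le_sum fun n _ => ?_)
  simp [Int.natAbs_mul]

theorem coeffNorm_prod_le {ι : Type*} (S : Finset ι) (F : ι → MvPolynomial σ ℤ) :
    coeffNorm (∏ i ∈ S, F i) ≤ ∏ i ∈ S, coeffNorm (F i) :=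
  Finset.le_prod_of_submultiplicative _ coeffNorm_one.le coeffNorm_mul_le _ _

theorem coeffNorm_X_pow (i : σ) (n : ℕ) : coeffNorm (X i ^ n : MvPolynomial σ ℤ) = 1 := by
  rw [X_pow_eq_monomial]; simp

theorem coeffNorm_rename_le {τ : Type*} (r : σ → τ) (F : MvPolynomial σ ℤ) :
    coeffNorm (rename r F) ≤ coeffNorm F := by
  conv_lhs => rw [F.as_sum, map_sum]
  refine (coeffNorm_sum_le _ _).trans (Finset.sum_le_sum fun m _ => ?_)
  simp [rename_monomial]

/-- The determinant of a matrix has norm at most the product of the row sums of norms: the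
expanded product of the row sums contains the Leibniz terms among its summands. -/
theorem coeffNorm_det_le {n : Type*} [Fintype n] [DecidableEq n]
    (M : Matrix n n (MvPolynomial σ ℤ)) :
    coeffNorm M.det ≤ ∏ i, ∑ k, coeffNorm (M i k) := by
  rw [← Matrix.det_transpose, Matrix.det_apply]
  refine (coeffNorm_sum_le _ _).trans ?_
  have h1 : ∀ π : Equiv.Perm n,
      coeffNorm (Equiv.Perm.sign π • ∏ i, M.transpose (π i) i) ≤ ∏ i, coeffNorm (M i (π i)) := by
    intro π
    rcases Int.units_eq_one_or (Equiv.Perm.sign π) with h | h <;> rw [h] <;>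
      simpa [Units.smul_def] using coeffNorm_prod_le Finset.univ fun i => M i (π i)
  refine (Finset.sum_le_sum fun π _ => h1 π).trans ?_
  rw [Finset.prod_univ_sum, Fintype.piFinset_univ]
  exact (Finset.sum_map (Finset.univ : Finset (Equiv.Perm n)) ⟨fun π => (π : n → n),
    DFunLike.coe_injective⟩ (fun q => ∏ i, coeffNorm (M i (q i)))).symm.le.trans
    (Finset.sum_le_sum_of_subset (Finset.subset_univ _))

end coeffNorm

/-! ### Elimination matrices for a perturbed square system -/

section elim
/-- The exponents of the monomials in `t` variables of total degree at most `D`. -/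
noncomputable def expSet (t D : ℕ) : Finset (Fin t →₀ ℕ) :=
  (Finsupp.finite_of_degree_le (σ := Fin t) D).toFinset

theorem mem_expSet {t D : ℕ} {α : Fin t →₀ ℕ} : α ∈ expSet t D ↔ α.degree ≤ D := by
  simp [expSet]

/-- The slack `D - α.degree`, taken as an additional entry, turns such exponents into solutions of
`∑ = D` in `t + 1` variables. -/
theorem card_expSet_le (t D : ℕ) : (expSet t D).card ≤ (D + t).choose t := by
  have h : (expSet t D).card ≤ (Finset.finsuppAntidiag (Finset.univ : Finset (Option (Fin t))) D).card := by
    refine Finset.card_le_card_of_injOn (fun α => α.optionElim (D - α.degree)) ?_ ?_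
    · intro α hα
      have hα := mem_expSet.mp hα
      rw [Finset.mem_coe, Finset.mem_finsuppAntidiag]
      refine ⟨?_, Finset.subset_univ _⟩
      rw [Fintype.sum_option]
      simp only [Finsupp.optionElim_apply_none, Finsupp.optionElim_apply_some]
      rw [← Finsupp.degree_eq_sum]; omega
    · intro α _ β _ hab
      ext i
      simpa using DFunLike.congr_fun hab (some i)
  rw [Finset.card_finsuppAntidiag_nat_eq_choose] at h
  simp only [Finset.card_univ, Fintype.card_option, Fintype.card_fin] at h
  rw [show t + 1 + D - 1 = D + t by omega, Nat.choose_symm_add] at h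
  exact h

variable {t : ℕ} {R : Type*} [CommRing R]

open Classical in
/-- The row polynomial attached to the monomial `x ^ α` in the elimination of all variables but
`x j` from a perturbed system `ε * x i ^ d + g i = 0`. If some `x i ^ d` divides `x ^ α`, it is
`x ^ α / x i ^ d * g i`, so that `ε * x ^ α` plus the row polynomial is a multiple of the `i`-th
equation; the index `i` is chosen arbitrarily. Otherwise it is `-(x ^ α * x j)`, so that `T * x ^ α`
plus the row polynomial vanishes when `T = x j`. -/
noncomputable def elimRow (d : ℕ) (g : Fin t → MvPolynomial (Fin t) R) (j : Fin t) (α : Fin t →₀ ℕ) :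
    MvPolynomial (Fin t) R :=
  if h : ∃ i, d ≤ α i then monomial (α - Finsupp.single h.choose d) 1 * g h.choose
  else -(monomial α 1 * X j)

/-- The coefficient matrix of the row polynomials, with rows and columns indexed by the monomials
of degree at most `D`. Coefficients at monomials of larger degree are discarded; there are none for
`D = t * (d - 1) + 1`, by `support_elimRow`. -/
noncomputable def elimMatrix (d D : ℕ) (g : Fin t → MvPolynomial (Fin t) R) (j : Fin t) :
    Matrix (expSet t D) (expSet t D) R :=
  Matrix.of fun α β => (elimRow d g j α).coeff β

/-- The degree `t * (d - 1) + 1` suffices for elimination: a monomial divisible by no `x i ^ d` has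
degree at most `t * (d - 1)`, so its product with `x j` still has degree at most
`t * (d - 1) + 1`. -/
theorem support_elimRow {d : ℕ} (hd : 1 ≤ d) {g : Fin t → MvPolynomial (Fin t) R}
    (hg : ∀ i, (g i).totalDegree ≤ d) (j : Fin t) {α : Fin t →₀ ℕ}
    (hα : α ∈ expSet t (t * (d - 1) + 1)) :
    (elimRow d g j α).support ⊆ expSet t (t * (d - 1) + 1) := by
  rw [mem_expSet] at hα
  suffices h : (elimRow d g j α).totalDegree ≤ t * (d - 1) + 1 by
    intro β hβ
    rw [mem_expSet]
    have := le_totalDegree hβ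
    rw [Finsupp.degree_eq_sum]
    rw [Finsupp.sum_fintype _ _ (fun _ => rfl)] at this
    omega
  unfold elimRow
  split_ifs with h
  · have h1 : Finsupp.single h.choose d ≤ α := by
      simpa using h.choose_spec
    have h2 : (α - Finsupp.single h.choose d).degree + d = α.degree := by
      have := congrArg Finsupp.degree (tsub_add_cancel_of_le h1)
      rw [map_add] at this
      simpa using this
    refine (totalDegree_mul _ _).trans ?_
    have h3 := totalDegree_monomial_le (α - Finsupp.single h.choose d) (1 : R)
    rw [Finsupp.sum_fintype _ _ (fun _ => rfl)] at h3
    rw [Finsupp.degree_eq_sum] at h2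
    have := hg h.choose
    simp only [id] at h3
    omega
  · push Not at h
    rw [totalDegree_neg]
    refine (totalDegree_mul _ _).trans ?_
    have h3 := totalDegree_monomial_le α (1 : R)
    rw [Finsupp.sum_fintype _ _ (fun _ => rfl)] at h3
    have h4 : ∑ i, α i ≤ ∑ _i : Fin t, (d - 1) := Finset.sum_le_sum fun i _ => by
      have := h i; omega
    have h5 : (X j : MvPolynomial (Fin t) R).totalDegree ≤ 1 := totalDegree_monomial_le _ _ |>.trans (by simp)
    simp at h4 h3
    omega

open Classical in
/-- The diagonal entry to be added to `elimMatrix` in the row of `α`: the perturbation parameter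
`ε` if some `x i ^ d` divides `x ^ α`, and the unknown `T` otherwise. -/
noncomputable def elimDiag {A : Type*} (ε T : A) (d : ℕ) (α : Fin t →₀ ℕ) : A :=
  if ∃ i, d ≤ α i then ε else T

/-- At a zero `y` of the perturbed system, the vector of the values of all monomials lies in the
kernel of the elimination matrix with `T = y j`. It is nonzero because the monomial `1` is one of
its entries. -/
theorem det_elim_eq_zero {d : ℕ} (hd : 1 ≤ d) {g : Fin t → MvPolynomial (Fin t) R}
    (hg : ∀ i, (g i).totalDegree ≤ d) (j : Fin t) {B : Type*} [CommRing B] [IsDomain B]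
    (φ : R →+* B) (y : Fin t → B) (ε : B) (hy : ∀ i, ε * y i ^ d + eval₂ φ y (g i) = 0) :
    (Matrix.diagonal (fun α : expSet t (t * (d - 1) + 1) => elimDiag ε (y j) d α.1) +
      (elimMatrix d (t * (d - 1) + 1) g j).map φ).det = 0 := by
  rw [← Matrix.exists_mulVec_eq_zero_iff]
  refine ⟨fun β => β.1.prod fun i k => y i ^ k, fun h => ?_, ?_⟩
  · have := congrFun h ⟨0, by simp [mem_expSet]⟩
    simp at this
  · ext α
    rw [Matrix.add_mulVec, Pi.add_apply, Matrix.mulVec_diagonal]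
    have h1 : ((elimMatrix d (t * (d - 1) + 1) g j).map φ).mulVec
        (fun β => β.1.prod fun i k => y i ^ k) α = eval₂ φ y (elimRow d g j α) := by
      rw [Matrix.mulVec, dotProduct, eval₂_eq]
      simp only [elimMatrix, Matrix.map_apply, Matrix.of_apply]
      rw [Finset.sum_coe_sort (expSet t (t * (d - 1) + 1)) (fun β => φ (coeff β (elimRow d g j α)) *
        β.prod fun i k => y i ^ k)]
      symm
      refine Finset.sum_subset (support_elimRow hd hg j α.2) fun m _ hm => ?_
      simp [MvPolynomial.notMem_support_iff.mp hm]
    rw [h1, elimDiag, elimRow]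
    split_ifs with h
    · have h1 : Finsupp.single h.choose d ≤ α.1 := by
        simpa using h.choose_spec
      conv_lhs => enter [1, 2, 1]; rw [← tsub_add_cancel_of_le h1]
      rw [Finsupp.prod_add_index' (by simp) (by intros; rw [pow_add]), Finsupp.prod_single_index (by simp),
        eval₂_mul, eval₂_monomial, map_one, one_mul]
      rw [Pi.zero_apply]
      linear_combination ((α.1 - Finsupp.single h.choose d).prod fun i k => y i ^ k) * hy h.choose
    · rw [← coe_eval₂Hom, map_neg, map_mul, coe_eval₂Hom, eval₂_monomial, eval₂_X]
      simp only [map_one, Pi.zero_apply]; ring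

/-- With `ε = T`, the elimination determinant becomes a characteristic polynomial; in particular
it is monic. -/
theorem det_elim_charpoly (d D : ℕ) (g : Fin t → MvPolynomial (Fin t) R) (j : Fin t) :
    (Matrix.diagonal (fun α : expSet t D => elimDiag Polynomial.X Polynomial.X d α.1) +
      (elimMatrix d D g j).map Polynomial.C).det = (-(elimMatrix d D g j)).charpoly := by
  rw [Matrix.charpoly]
  congr 1
  ext1 α β
  by_cases h : α = β <;> simp [elimDiag, h]
end elim

/-! ### Heights of ideals of linear slices -/

section height
open Ideal
variable {ι Ω : Type*} [Field Ω]

/-- The endomorphism of the polynomial ring that replaces `X i` by the constant `ξ i` for `i ∈ s`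
and fixes the other variables. -/
noncomputable def partialEval (ξ : ι → Ω) (s : Set ι) : MvPolynomial ι Ω →ₐ[Ω] MvPolynomial ι Ω :=
  open Classical in aeval fun i => if i ∈ s then C (ξ i) else X i

theorem partialEval_mem {ξ : ι → Ω} {s : Set ι} {Q : Ideal (MvPolynomial ι Ω)}
    (h : ∀ i ∈ s, X i - C (ξ i) ∈ Q) (F : MvPolynomial ι Ω) : F - partialEval ξ s F ∈ Q := by
  rw [← Ideal.Quotient.eq]
  have : (Ideal.Quotient.mkₐ Ω Q) = (Ideal.Quotient.mkₐ Ω Q).comp (partialEval ξ s) := by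
    ext i
    simp only [partialEval, AlgHom.comp_apply, aeval_X]
    split_ifs with hi
    · exact Ideal.Quotient.eq.mpr (h i hi)
    · rfl
  exact DFunLike.congr_fun this F

theorem ker_partialEval_le {ξ : ι → Ω} {s : Set ι} {Q : Ideal (MvPolynomial ι Ω)}
    (h : ∀ i ∈ s, X i - C (ξ i) ∈ Q) : RingHom.ker (partialEval ξ s) ≤ Q := by
  intro F hF
  have := partialEval_mem h F
  rwa [RingHom.mem_ker.mp hF, sub_zero] at this

/-- Fixing the coordinates one after the other gives a strictly increasing chain of primes. -/
theorem card_le_height_ker_partialEval (ξ : ι → Ω) (s : Finset ι) :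
    (s.card : ℕ∞) ≤ (RingHom.ker (partialEval ξ (s : Set ι))).height := by
  classical
  induction s using Finset.induction_on with
  | empty => simp
  | insert a s ha ih =>
    have : (RingHom.ker (partialEval ξ (s : Set ι))).IsPrime := RingHom.ker_isPrime _
    have : (RingHom.ker (partialEval ξ ((insert a s : Finset ι) : Set ι))).IsPrime :=
      RingHom.ker_isPrime _
    rw [Finset.card_insert_of_notMem ha, Nat.cast_add, Nat.cast_one]
    refine (add_le_add_left ih 1).trans (height_add_one_le_of_lt_of_isPrime (lt_of_le_of_ne ?_ ?_))
    · refine ker_partialEval_le fun i hi => ?_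
      rw [RingHom.mem_ker]
      have : i ∈ insert a s := Finset.mem_insert_of_mem hi
      simp [partialEval, Finset.mem_coe.mp hi]
    · intro h
      have h1 : X a - C (ξ a) ∈ RingHom.ker (partialEval ξ ((insert a s : Finset ι) : Set ι)) := by
        rw [RingHom.mem_ker]; simp [partialEval]
      rw [← h, RingHom.mem_ker] at h1
      simp only [partialEval, map_sub, aeval_X, Finset.mem_coe, ha, if_false, algHom_C] at h1
      have h2 := congrArg (coeff (Finsupp.single a 1)) h1
      have hne : (0 : ι →₀ ℕ) ≠ Finsupp.single a 1 := (Finsupp.single_ne_zero.mpr one_ne_zero).symm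
      simp [coeff_C, algebraMap_eq, hne] at h2

theorem card_le_height {ξ : ι → Ω} {s : Finset ι} {Q : Ideal (MvPolynomial ι Ω)}
    (h : ∀ i ∈ s, X i - C (ξ i) ∈ Q) : (s.card : ℕ∞) ≤ Q.height :=
  (card_le_height_ker_partialEval ξ s).trans (height_mono (ker_partialEval_le h))

/-- The maximal ideal of the polynomials that vanish at the point `ξ`. -/
noncomputable def pointIdeal (ξ : ι → Ω) : Ideal (MvPolynomial ι Ω) := RingHom.ker (aeval (R := Ω) ξ)

instance (ξ : ι → Ω) : (pointIdeal ξ).IsPrime := RingHom.ker_isPrime (aeval (R := Ω) ξ)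

theorem mem_pointIdeal {ξ : ι → Ω} {F : MvPolynomial ι Ω} : F ∈ pointIdeal ξ ↔ aeval ξ F = 0 := Iff.rfl

theorem pointIdeal_le {ξ : ι → Ω} {Q : Ideal (MvPolynomial ι Ω)}
    (h : ∀ i, X i - C (ξ i) ∈ Q) : pointIdeal ξ ≤ Q := by
  intro F hF
  have h1 : partialEval ξ Set.univ F = C (aeval ξ F) := by
    have : partialEval ξ Set.univ = (Algebra.ofId Ω _).comp (aeval (R := Ω) ξ) := by
      ext i
      simp [partialEval, Algebra.ofId_apply, algebraMap_eq]
    rw [this]; rfl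
  have := partialEval_mem (fun i _ => h i) F (s := Set.univ)
  rwa [h1, mem_pointIdeal.mp hF, map_zero, sub_zero] at this

theorem pointIdeal_eq_span [Fintype ι] (ξ : ι → Ω) :
    pointIdeal ξ = Ideal.span (Set.range fun i => X i - C (ξ i)) := by
  refine le_antisymm (pointIdeal_le fun i => subset_span ⟨i, rfl⟩) (span_le.mpr ?_)
  rintro _ ⟨i, rfl⟩
  simp [mem_pointIdeal]

/-- Krull's height theorem for the ideal generated by a finite family. -/
theorem height_le_card_of_minimal {R : Type*} [CommRing R] [IsNoetherianRing R] {κ : Type*}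
    [Fintype κ] (g : κ → R) (Q : Ideal R) (hQ : Q ∈ (Ideal.span (Set.range g)).minimalPrimes) :
    Q.height ≤ Fintype.card κ := by
  refine (height_le_card_of_mem_minimalPrimes_span (Set.finite_range g) hQ).trans ?_
  rw [← Nat.card_coe_set_eq, ← Nat.card_eq_fintype_card]
  exact_mod_cast Finite.card_range_le g

theorem height_pointIdeal_le [Fintype ι] (ξ : ι → Ω) :
    (pointIdeal ξ).height ≤ Fintype.card ι := by
  refine height_le_card_of_minimal (fun i => X i - C (ξ i)) _ ?_
  rw [← pointIdeal_eq_span]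
  simp [Ideal.minimalPrimes_eq_subsingleton_self]

end height

/-! ### Isolated zeros under perturbation -/

section limit
open Ideal
variable {t : ℕ} {Ω : Type*} [Field Ω]

/-- An isolated zero `ξ` of a square system `g` survives the perturbation `ε * x i ^ d + g i`: the
point `(0, ξ)` lies on an irreducible component `q` of the perturbed system on which `ε` (the
variable `X none`) does not vanish identically. Indeed `q` is cut out by `t` equations in `t + 1`
variables, so it is not a point, whereas a component contained in `ε = 0` would be the
single point `(0, ξ)`. -/
theorem exists_branch (d : ℕ) (g : Fin t → MvPolynomial (Fin t) Ω) (ξ : Fin t → Ω)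
    (hg : ∀ i, g i ∈ pointIdeal ξ)
    (hiso : ∀ Q : Ideal (MvPolynomial (Fin t) Ω), Q.IsPrime → (∀ i, g i ∈ Q) →
      Q ≤ pointIdeal ξ → Q = pointIdeal ξ) :
    ∃ q : Ideal (MvPolynomial (Option (Fin t)) Ω), q.IsPrime ∧
      (∀ i, X none * X (some i) ^ d + rename some (g i) ∈ q) ∧ X none ∉ q ∧
      q ≤ pointIdeal (fun o => o.elim 0 ξ) := by
  set m := pointIdeal (fun o : Option (Fin t) => o.elim 0 ξ) with hm
  set G : Fin t → MvPolynomial (Option (Fin t)) Ω :=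
    fun i => X none * X (some i) ^ d + rename some (g i) with hG
  have hle : Ideal.span (Set.range G) ≤ m := by
    rw [span_le]
    rintro _ ⟨i, rfl⟩
    have := hg i
    rw [mem_pointIdeal] at this
    simp only [hG, SetLike.mem_coe, hm, mem_pointIdeal, map_add, map_mul, aeval_X, aeval_rename,
      Option.elim_none, zero_mul, zero_add]
    exact this
  obtain ⟨q, hq, hqm⟩ := Ideal.exists_minimalPrimes_le hle
  have hqp : q.IsPrime := hq.1.1
  have hGq : ∀ i, G i ∈ q := fun i => hq.1.2 (subset_span ⟨i, rfl⟩)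
  refine ⟨q, hqp, hGq, fun h0 => ?_, hqm⟩
  have h1 : q.comap (rename some : MvPolynomial (Fin t) Ω →ₐ[Ω] _) = pointIdeal ξ := by
    refine hiso _ (Ideal.IsPrime.comap _) (fun i => ?_) fun F hF => ?_
    · rw [Ideal.mem_comap]
      have := q.sub_mem (hGq i) (q.mul_mem_right (X (some i) ^ d) h0)
      simpa [hG] using this
    · have := hqm (Ideal.mem_comap.mp hF)
      rw [hm, mem_pointIdeal, aeval_rename] at this
      exact mem_pointIdeal.mpr this
  have h2 : ∀ o : Option (Fin t), X o - C (o.elim 0 ξ) ∈ q := by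
    rintro (_ | i)
    · simpa using h0
    · have : X i - C (ξ i) ∈ pointIdeal ξ := by simp [mem_pointIdeal]
      rw [← h1, Ideal.mem_comap] at this
      simpa using this
  have h3 := card_le_height (ξ := fun o : Option (Fin t) => o.elim 0 ξ) (s := Finset.univ) (Q := q)
    (fun o _ => h2 o)
  have h4 := h3.trans (height_le_card_of_minimal G q hq)
  simp only [Finset.card_univ, Fintype.card_option, Fintype.card_fin, Nat.cast_le] at h4
  omega

end limit

/-! ### Bounded relations for the coordinates of an isolated zero -/

section relation
variable {t : ℕ}

theorem sum_coeffNorm_elimRow_le {τ : Type*} (d D : ℕ) (g : Fin t → MvPolynomial (Fin t) (MvPolynomial τ ℤ))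
    (j : Fin t) {b : ℕ} (hb : 1 ≤ b) (hg : ∀ i β, coeffNorm ((g i).coeff β) ≤ b) (α : expSet t D) :
    ∑ β, coeffNorm (elimMatrix d D g j α β) ≤ (expSet t D).card * b := by
  have : ∀ β : expSet t D, coeffNorm (elimMatrix d D g j α β) ≤ b := by
    intro β
    simp only [elimMatrix, Matrix.of_apply, elimRow]
    split_ifs with h
    · rw [coeff_monomial_mul']
      split_ifs
      · simpa using hg _ _
      · simp
    · rw [X, monomial_mul, coeff_neg, coeffNorm_neg, coeff_monomial]
      split_ifs <;> simp [hb]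
  refine (Finset.sum_le_card_nsmul _ _ b fun β _ => this β).trans ?_
  simp

theorem sum_coeffNorm_elimRow_zero_le {τ : Type*} {d : ℕ} (hd : 1 ≤ d) (D : ℕ)
    (g : Fin t → MvPolynomial (Fin t) (MvPolynomial τ ℤ)) (j : Fin t) (α : expSet t D) (hα : α.1 = 0) :
    ∑ β, coeffNorm (elimMatrix d D g j α β) ≤ 1 := by
  have h : ¬ ∃ i, d ≤ α.1 i := by simp [hα]; exact fun _ => by omega
  simp only [elimMatrix, Matrix.of_apply, elimRow, dif_neg h, X, monomial_mul, coeff_neg, coeffNorm_neg]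
  rw [Finset.sum_coe_sort (expSet t D) fun β => coeffNorm (coeff β
    (monomial (α.1 + Finsupp.single j 1) ((1 : MvPolynomial τ ℤ) * 1)))]
  simp only [coeff_monomial, mul_one, apply_ite coeffNorm, coeffNorm_one, coeffNorm_zero]
  rw [Finset.sum_ite_eq]
  split_ifs <;> simp

/-- The determinant of the elimination matrix as a polynomial with integer coefficients. The
variable `X none` is `ε`, `X (some none)` is `T`, and the variables `X (some (some i))` are those of
the coefficients of `g`. -/
noncomputable def elimDet (d D : ℕ) (g : Fin t → MvPolynomial (Fin t) (MvPolynomial (Fin t) ℤ)) (j : Fin t) :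
    MvPolynomial (Option (Option (Fin t))) ℤ :=
  (Matrix.diagonal (fun α : expSet t D => elimDiag (X none) (X (some none)) d α.1) +
    (elimMatrix d D g j).map (rename (some ∘ some)).toRingHom).det

/-- The row of the monomial `1` has norm at most `2`, which saves one factor. -/
theorem coeffNorm_elimDet_le {d : ℕ} (hd : 1 ≤ d) (D : ℕ)
    (g : Fin t → MvPolynomial (Fin t) (MvPolynomial (Fin t) ℤ))
    (j : Fin t) {b : ℕ} (hb : 1 ≤ b) (hg : ∀ i β, coeffNorm ((g i).coeff β) ≤ b) :
    coeffNorm (elimDet d D g j) ≤ 2 * (1 + (expSet t D).card * b) ^ ((expSet t D).card - 1) := by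
  have key : ∀ α : expSet t D, ∑ β, coeffNorm (((Matrix.diagonal
      (fun α : expSet t D => elimDiag (X none) (X (some none)) d α.1) +
      (elimMatrix d D g j).map (rename (some ∘ some)).toRingHom :
        Matrix _ _ (MvPolynomial (Option (Option (Fin t))) ℤ))) α β) ≤
      1 + ∑ β, coeffNorm (elimMatrix d D g j α β) := by
    intro α
    have h1 : ∑ β, coeffNorm ((Matrix.diagonal (fun α : expSet t D =>
        (elimDiag (X none) (X (some none)) d α.1 : MvPolynomial (Option (Option (Fin t))) ℤ))) α β) = 1 := by
      rw [Finset.sum_eq_single α]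
      · rw [Matrix.diagonal_apply_eq, elimDiag]; split_ifs <;> simp
      · intro β _ hβ; rw [Matrix.diagonal_apply_ne _ hβ.symm, coeffNorm_zero]
      · simp
    rw [← h1, ← Finset.sum_add_distrib]
    refine Finset.sum_le_sum fun β _ => (coeffNorm_add_le _ _).trans ?_
    exact add_le_add_right (coeffNorm_rename_le _ _) _
  refine (coeffNorm_det_le _).trans ?_
  let z : expSet t D := ⟨0, by simp [mem_expSet]⟩
  rw [← Finset.mul_prod_erase Finset.univ _ (Finset.mem_univ z)]
  refine Nat.mul_le_mul ((key z).trans ?_) ?_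
  · have := sum_coeffNorm_elimRow_zero_le hd D g j z rfl
    omega
  · refine (Finset.prod_le_pow_card _ _ (1 + (expSet t D).card * b) fun α _ => (key α).trans
      (add_le_add_right (sum_coeffNorm_elimRow_le d D g j hb hg α) 1)).trans ?_
    simp

theorem elimDet_ne_zero (d D : ℕ) (g : Fin t → MvPolynomial (Fin t) (MvPolynomial (Fin t) ℤ)) (j : Fin t) :
    elimDet d D g j ≠ 0 := by
  intro h
  let ψ : MvPolynomial (Option (Option (Fin t))) ℤ →+* Polynomial (MvPolynomial (Fin t) ℤ) :=
    eval₂Hom (Int.castRingHom _) fun o => o.elim Polynomial.X fun o => o.elim Polynomial.X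
      fun i => Polynomial.C (X i)
  have h1 : ψ.comp (rename (some ∘ some)).toRingHom = Polynomial.C := by
    apply MvPolynomial.ringHom_ext
    · intro r; simp [ψ]
    · intro i; simp [ψ]
  have h2 : ψ (elimDet d D g j) = (-(elimMatrix d D g j)).charpoly := by
    rw [← det_elim_charpoly, elimDet, RingHom.map_det]
    congr 1
    ext1 α β
    have h3 := congrArg (fun f => f (elimMatrix d D g j α β)) h1
    simp only [RingHom.comp_apply] at h3
    simp only [RingHom.mapMatrix_apply, Matrix.map_apply, Matrix.add_apply, map_add, h3]
    congr 1
    by_cases hab : α = β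
    · subst hab
      simp only [Matrix.diagonal_apply_eq, elimDiag]
      split_ifs <;> simp [ψ]
    · simp [Matrix.diagonal_apply_ne _ hab]
  rw [h, map_zero] at h2
  exact (Matrix.charpoly_monic _).ne_zero h2.symm

/-- A coordinate of an isolated zero of `g` is a root of a nonzero polynomial whose integer
coefficients are bounded explicitly: divide `elimDet` by the largest possible power of `ε`, then set
`ε = 0`. The division leaves the set of coefficients unchanged, and it is legitimate on a branch
where `ε` does not vanish identically. -/
theorem exists_relation {Ω : Type*} [Field Ω] {d : ℕ} (hd : 1 ≤ d)
    (g : Fin t → MvPolynomial (Fin t) (MvPolynomial (Fin t) ℤ)) (hdeg : ∀ i, (g i).totalDegree ≤ d)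
    {b : ℕ} (hb : 1 ≤ b) (hg : ∀ i β, coeffNorm ((g i).coeff β) ≤ b)
    (φ : MvPolynomial (Fin t) ℤ →+* Ω) (ξ : Fin t → Ω)
    (hz : ∀ i, map φ (g i) ∈ pointIdeal ξ)
    (hiso : ∀ Q : Ideal (MvPolynomial (Fin t) Ω), Q.IsPrime → (∀ i, map φ (g i) ∈ Q) →
      Q ≤ pointIdeal ξ → Q = pointIdeal ξ) (j : Fin t) :
    ∃ F : Polynomial (MvPolynomial (Fin t) ℤ), F ≠ 0 ∧ F.eval₂ φ (ξ j) = 0 ∧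
      ∀ k m, ((F.coeff k).coeff m).natAbs ≤
        2 * (1 + (expSet t (t * (d - 1) + 1)).card * b) ^ ((expSet t (t * (d - 1) + 1)).card - 1) := by
  obtain ⟨q, hqp, hGq, h0, hqm⟩ := exists_branch d _ ξ hz hiso
  set Δ := elimDet d (t * (d - 1) + 1) g j with hΔ
  let φA : MvPolynomial (Option (Option (Fin t))) ℤ →+* MvPolynomial (Option (Fin t)) Ω :=
    eval₂Hom (Int.castRingHom _) fun o => o.elim (X none) fun o => o.elim (X (some j))
      fun i => C (φ (X i))
  have hφA : φA.comp (rename (some ∘ some)).toRingHom = C.comp φ := by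
    apply MvPolynomial.ringHom_ext
    · intro r; simp [φA]
    · intro i; simp [φA]
  -- The determinant vanishes on the branch `q`.
  have hΔq : φA Δ ∈ q := by
    rw [← Ideal.Quotient.eq_zero_iff_mem, hΔ, elimDet, RingHom.map_det, RingHom.map_det]
    rw [← det_elim_eq_zero hd hdeg j ((Ideal.Quotient.mk q).comp (C.comp φ))
      (fun i => Ideal.Quotient.mk q (X (some i))) (Ideal.Quotient.mk q (X none))]
    · congr 1
      ext1 α β
      have h3 := congrArg (fun f => f (elimMatrix d (t * (d - 1) + 1) g j α β)) hφA
      simp only [RingHom.comp_apply] at h3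
      simp only [RingHom.mapMatrix_apply, Matrix.map_apply, Matrix.add_apply, map_add, h3,
        RingHom.comp_apply]
      congr 1
      by_cases hab : α = β
      · subst hab
        simp only [Matrix.diagonal_apply_eq, elimDiag]
        split_ifs <;> simp [φA]
      · simp [Matrix.diagonal_apply_ne _ hab]
    · intro i
      have h4 := Ideal.Quotient.eq_zero_iff_mem.mpr (hGq i)
      rw [map_add, map_mul, map_pow] at h4
      rw [← h4]
      congr 1
      have : (Ideal.Quotient.mk q).comp ((rename some : MvPolynomial (Fin t) Ω →ₐ[Ω] _).toRingHom.comp (map φ)) =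
          eval₂Hom ((Ideal.Quotient.mk q).comp (C.comp φ)) (fun i => Ideal.Quotient.mk q (X (some i))) := by
        apply MvPolynomial.ringHom_ext <;> intro r <;> simp
      exact (DFunLike.congr_fun this (g i)).symm
  set E := optionEquivLeft ℤ (Option (Fin t)) Δ with hE
  have hE0 : E ≠ 0 := by
    rw [hE, ne_eq, EmbeddingLike.map_eq_zero_iff]
    exact elimDet_ne_zero _ _ _ _
  -- Remove the largest power of `ε` from the determinant.
  obtain ⟨E', hE'⟩ : Polynomial.X ^ E.natTrailingDegree ∣ E := by
    rw [Polynomial.X_pow_dvd_iff]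
    exact fun k hk => Polynomial.coeff_eq_zero_of_lt_natTrailingDegree hk
  have hcoeff : E'.coeff 0 = E.coeff E.natTrailingDegree := by
    conv_rhs => rw [hE', ← hE']
    have := Polynomial.coeff_X_pow_mul E' E.natTrailingDegree 0
    rw [zero_add] at this
    rw [← this, ← hE']
  have hne : E'.coeff 0 ≠ 0 := by
    rw [hcoeff]; exact Polynomial.trailingCoeff_nonzero_iff_nonzero.mpr hE0
  let θ := φA.comp (RingHomClass.toRingHom (optionEquivLeft ℤ (Option (Fin t))).symm)
  have hθ : θ E' ∈ q := by
    have h1 : θ E ∈ q := by simpa [θ, hE] using hΔq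
    have h2 : θ Polynomial.X = X none := by simp [θ, φA]
    rw [hE', map_mul, map_pow, h2] at h1
    exact (hqp.mem_or_mem h1).resolve_left fun h => h0 (hqp.mem_of_pow_mem _ h)
  let ev : MvPolynomial (Option (Fin t)) Ω →+* Ω := (aeval (R := Ω) fun o => o.elim 0 ξ).toRingHom
  have hev : ev (θ E') = 0 := hqm hθ
  let χ : MvPolynomial (Option (Fin t)) ℤ →+* Ω := (ev.comp θ).comp Polynomial.C
  have h1 : ev.comp θ = χ.comp Polynomial.constantCoeff := by
    apply Polynomial.ringHom_ext'
    · ext <;> simp [χ]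
    · simp [θ, φA, ev]
  have h2 : χ (E'.coeff 0) = 0 := by
    rw [← hev]; exact (DFunLike.congr_fun h1 E').symm
  have h3 : χ = (Polynomial.eval₂RingHom φ (ξ j)).comp
      (RingHomClass.toRingHom (optionEquivLeft ℤ (Fin t))) := by
    apply MvPolynomial.ringHom_ext
    · intro r; simp
    · rintro (_ | i)
      · simp [χ, θ, φA, ev]
      · simp [χ, θ, φA, ev]
  refine ⟨optionEquivLeft ℤ (Fin t) (E'.coeff 0), ?_, ?_, ?_⟩
  · rwa [ne_eq, EmbeddingLike.map_eq_zero_iff]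
  · rw [h3] at h2; exact h2
  · intro k m
    rw [optionEquivLeft_coeff_coeff, hcoeff, hE, optionEquivLeft_coeff_coeff]
    exact (natAbs_coeff_le_coeffNorm _ _).trans (coeffNorm_elimDet_le hd _ g j hb hg)

end relation

/-! ### Reduction to a square system by generic combinations -/

section generic
open Ideal
variable {t s : ℕ} {Ω : Type*} [Field Ω]

/-- If some `f j` is not in `Q`, then every `τ` with `∑ τ ^ j * f j ∈ Q` is a root of the nonzero
polynomial `∑ f j * T ^ j` over the residue ring of `Q`. -/
theorem finite_combination_mem (f : Fin s → MvPolynomial (Fin t) Ω) (Q : Ideal (MvPolynomial (Fin t) Ω))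
    (hQ : Q.IsPrime) (hf : ∃ j, f j ∉ Q) :
    {τ : Ω | ∑ j : Fin s, C (τ ^ (j : ℕ)) * f j ∈ Q}.Finite := by
  obtain ⟨j, hj⟩ := hf
  let P : Polynomial (MvPolynomial (Fin t) Ω ⧸ Q) :=
    ∑ j : Fin s, Polynomial.monomial (j : ℕ) (Ideal.Quotient.mk Q (f j))
  have hP : P ≠ 0 := by
    intro h
    have h1 := congrArg (fun P => P.coeff j) h
    simp only [P, Polynomial.finsetSum_coeff, Polynomial.coeff_monomial, Polynomial.coeff_zero] at h1
    rw [Finset.sum_eq_single j (fun k _ hk => if_neg (fun h => hk (Fin.ext h))) (by simp),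
      if_pos rfl] at h1
    exact hj (Ideal.Quotient.eq_zero_iff_mem.mp h1)
  have hinj : Function.Injective ((Ideal.Quotient.mk Q).comp (C : Ω →+* MvPolynomial (Fin t) Ω)) :=
    RingHom.injective _
  refine ((Polynomial.rootSet_finite P _).preimage hinj.injOn).subset fun τ hτ => ?_
  rw [Set.mem_preimage, Polynomial.mem_rootSet]
  refine ⟨hP, ?_⟩
  rw [← Ideal.Quotient.eq_zero_iff_mem.mpr hτ]
  simp [P, mul_comm]

/-- If `ξ` is an isolated point of the zero set of `f` cut by the hyperplanes `x i = ξ i`, `i ∈ J`,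
then the `f j` can be replaced by one combination `∑ Y ^ j * f j` for each coordinate outside `J`.
Each new combination avoids the finitely many components on which the `f j` do not all vanish, so it
raises the height by at least one, and there is no room left after `t` steps. -/
theorem exists_generic_combinations (f : Fin s → MvPolynomial (Fin t) Ω) (ξ : Fin t → Ω)
    (J : Finset (Fin t)) (Y : ℕ → Ω) (hY : Function.Injective Y)
    (hiso : ∀ Q : Ideal (MvPolynomial (Fin t) Ω), Q.IsPrime → (∀ j, f j ∈ Q) →
      (∀ i ∈ J, X i - C (ξ i) ∈ Q) → Q ≤ pointIdeal ξ → Q = pointIdeal ξ) :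
    ∃ n : Fin t → ℕ, Set.InjOn n {i | i ∉ J} ∧
      ∀ Q : Ideal (MvPolynomial (Fin t) Ω), Q.IsPrime → (∀ i ∈ J, X i - C (ξ i) ∈ Q) →
        (∀ i, i ∉ J → ∑ j : Fin s, C (Y (n i) ^ (j : ℕ)) * f j ∈ Q) →
        Q ≤ pointIdeal ξ → Q = pointIdeal ξ := by
  classical
  have key : ∀ K : Finset (Fin t), Disjoint J K → ∃ n : Fin t → ℕ, Set.InjOn n K ∧
      ∀ Q : Ideal (MvPolynomial (Fin t) Ω), Q.IsPrime → (∀ i ∈ J, X i - C (ξ i) ∈ Q) →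
        (∀ i ∈ K, ∑ j : Fin s, C (Y (n i) ^ (j : ℕ)) * f j ∈ Q) →
        Q ≤ pointIdeal ξ → Q = pointIdeal ξ ∨ ((J.card + K.card : ℕ) : ℕ∞) ≤ Q.height := by
    intro K
    induction K using Finset.induction_on with
    | empty => exact fun _ => ⟨0, by simp, fun Q hQ hJ _ _ => Or.inr (by simpa using card_le_height hJ)⟩
    | insert a K ha ih =>
      intro hdis
      obtain ⟨n, hn, hQ⟩ := ih (hdis.mono_right (Finset.subset_insert _ _))
      let I : Ideal (MvPolynomial (Fin t) Ω) :=
        Ideal.span ({F | ∃ i ∈ J, F = X i - C (ξ i)} ∪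
          {F | ∃ i ∈ K, F = ∑ j : Fin s, C (Y (n i) ^ (j : ℕ)) * f j})
      have hfin : (⋃ Q ∈ {Q ∈ I.minimalPrimes | ∃ j, f j ∉ Q},
          {τ : Ω | ∑ j : Fin s, C (τ ^ (j : ℕ)) * f j ∈ Q}).Finite :=
        Set.Finite.biUnion ((I.finite_minimalPrimes_of_isNoetherianRing).subset (Set.sep_subset _ _))
          fun Q hQ => finite_combination_mem f Q hQ.1.1.1 hQ.2
      obtain ⟨N, hN⟩ := ((hfin.preimage hY.injOn).union (K.image n).finite_toSet).exists_notMem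
      rw [Set.mem_union, not_or] at hN
      obtain ⟨hN1, hN2⟩ := hN
      have hupd : ∀ i ∈ K, Function.update n a N i = n i := fun i hi =>
        Function.update_of_ne (by rintro rfl; exact ha hi) _ _
      refine ⟨Function.update n a N, ?_, fun Q hQp hQJ hQK hQle => ?_⟩
      · rw [Finset.coe_insert, Set.injOn_insert (by simpa using ha)]
        refine ⟨fun i hi j hj hij => hn hi hj ?_, ?_⟩
        · rwa [hupd i hi, hupd j hj] at hij
        · rintro ⟨i, hi, hi'⟩
          rw [hupd i hi, Function.update_self] at hi'
          exact hN2 (by simpa using ⟨i, hi, hi'⟩)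
      · have hIQ : I ≤ Q := by
          refine span_le.mpr ?_
          rintro F (⟨i, hi, rfl⟩ | ⟨i, hi, rfl⟩)
          · exact hQJ i hi
          · have := hQK i (Finset.mem_insert_of_mem hi)
            rwa [hupd i hi] at this
        obtain ⟨q, hq, hqQ⟩ := Ideal.exists_minimalPrimes_le hIQ
        have hqp : q.IsPrime := hq.1.1
        have hqJ : ∀ i ∈ J, X i - C (ξ i) ∈ q := fun i hi =>
          hq.1.2 (subset_span (Or.inl ⟨i, hi, rfl⟩))
        have hqK : ∀ i ∈ K, ∑ j : Fin s, C (Y (n i) ^ (j : ℕ)) * f j ∈ q := fun i hi =>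
          hq.1.2 (subset_span (Or.inr ⟨i, hi, rfl⟩))
        rcases hQ q hqp hqJ hqK (hqQ.trans hQle) with h | h
        · exact Or.inl (le_antisymm hQle (h ▸ hqQ))
        · by_cases hf : ∃ j, f j ∉ q
          · right
            have hlt : q < Q := by
              refine lt_of_le_of_ne hqQ ?_
              rintro rfl
              refine hN1 (Set.mem_biUnion (x := q) ⟨hq, hf⟩ ?_)
              simpa using hQK a (Finset.mem_insert_self _ _)
            refine le_trans ?_ (height_add_one_le_of_lt_of_isPrime hlt)
            rw [Finset.card_insert_of_notMem ha, ← add_assoc, Nat.cast_add _ 1, Nat.cast_one]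
            exact add_le_add_left h 1
          · push Not at hf
            have := hiso q hqp hf hqJ (hqQ.trans hQle)
            exact Or.inl (le_antisymm hQle (this ▸ hqQ))
  obtain ⟨n, hn, hQ⟩ := key Jᶜ disjoint_compl_right
  refine ⟨n, by simpa [Set.compl_def] using hn, fun Q hQp hQJ hQK hQle => ?_⟩
  rcases hQ Q hQp hQJ (fun i hi => hQK i (by simpa using hi)) hQle with h | h
  · exact h
  · by_contra hne
    have h1 := height_add_one_le_of_lt_of_isPrime (lt_of_le_of_ne hQle hne)
    have h2 := height_pointIdeal_le ξ
    rw [Finset.card_add_card_compl, Fintype.card_fin] at h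
    rw [Fintype.card_fin] at h2
    have h3 := ((add_le_add_left h 1).trans h1).trans h2
    norm_cast at h3
    omega

end generic

/-! ### Zeros of maximal transcendence degree -/

section maximal
variable {t s : ℕ}

/-- Among all zeros of `f` in all fields, one with the largest possible number of coordinates that
are algebraically independent over `ℤ`. The field is of arbitrary characteristic. -/
theorem exists_max_zero (f : Fin s → MvPolynomial (Fin t) ℤ)
    (hzero : ∃ x : Fin t → ℂ, ∀ i, aeval x (f i) = 0) :
    ∃ (κ : Type) (_ : Field κ) (y : Fin t → κ) (J : Finset (Fin t)), (∀ i, aeval y (f i) = 0) ∧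
      AlgebraicIndepOn ℤ y (J : Set (Fin t)) ∧
      ∀ (κ' : Type) [Field κ'] (y' : Fin t → κ') (J' : Finset (Fin t)), (∀ i, aeval y' (f i) = 0) →
        AlgebraicIndepOn ℤ y' (J' : Set (Fin t)) → J'.card ≤ J.card := by
  let S : Set ℕ := {n | ∃ (κ : Type) (_ : Field κ) (y : Fin t → κ) (J : Finset (Fin t)),
    (∀ i, aeval y (f i) = 0) ∧ AlgebraicIndepOn ℤ y (J : Set (Fin t)) ∧ J.card = n}
  have hne : S.Nonempty := by
    obtain ⟨x, hx⟩ := hzero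
    refine ⟨0, ℂ, inferInstance, x, ∅, hx, ?_, rfl⟩
    rw [AlgebraicIndepOn]
    have : IsEmpty ((∅ : Finset (Fin t)) : Set (Fin t)) := by simp
    exact algebraicIndependent_empty_type_iff.mpr (algebraMap ℤ ℂ).injective_int
  have hb : BddAbove S := ⟨t, by
    rintro n ⟨_, _, _, J, _, _, rfl⟩
    simpa using Finset.card_le_univ J⟩
  obtain ⟨κ, hκ, y, J, h1, h2, h3⟩ := Nat.sSup_mem hne hb
  exact ⟨κ, hκ, y, J, h1, h2, fun κ' _ y' J' h4 h5 => h3 ▸ le_csSup hb ⟨κ', _, y', J', h4, h5, rfl⟩⟩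

/-- An element of an extension `κ` of an algebraically closed field `Ω` lies in `Ω` if it is
algebraic over a subring whose elements lie in `Ω`. -/
theorem mem_range_of_isAlgebraic {S Ω κ : Type*} [CommRing S] [Field Ω] [IsAlgClosed Ω] [Field κ]
    [Algebra Ω κ] [Algebra S κ] [FaithfulSMul S κ]
    (hS : ∀ c : S, algebraMap S κ c ∈ Set.range (algebraMap Ω κ))
    (a : κ) (ha : IsAlgebraic S a) : a ∈ Set.range (algebraMap Ω κ) := by
  obtain ⟨P, hP, hPa⟩ := ha
  have hl : P.map (algebraMap S κ) ∈ Polynomial.lifts (algebraMap Ω κ) := by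
    rw [Polynomial.lifts_iff_coeff_lifts]
    intro n
    rw [Polynomial.coeff_map]
    exact hS _
  obtain ⟨P', hP'⟩ := (Polynomial.mem_lifts _).mp hl
  have h1 : IsAlgebraic Ω a := by
    refine ⟨P', ?_, ?_⟩
    · rintro rfl
      rw [Polynomial.map_zero] at hP'
      exact hP ((Polynomial.map_eq_zero_iff (FaithfulSMul.algebraMap_injective S κ)).mp hP'.symm)
    · rw [Polynomial.aeval_def, ← Polynomial.eval_map, hP', Polynomial.eval_map,
        ← Polynomial.aeval_def, hPa]
  exact minpoly.mem_range_of_degree_eq_one Ω a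
    (IsAlgClosed.degree_eq_one_of_irreducible Ω (minpoly.irreducible h1.isIntegral))

/-- For a zero with a maximal set `J` of algebraically independent coordinates, the zero
is isolated in the slice of the zero set that fixes the coordinates in `J`: at the generic point of a
component of the slice, the other coordinates are algebraic over those in `J` by maximality, hence
constant. -/
theorem isolated_of_max (f : Fin s → MvPolynomial (Fin t) ℤ) {Ω : Type} [Field Ω] [IsAlgClosed Ω]
    (ξ : Fin t → Ω) (J : Finset (Fin t)) (hJ : AlgebraicIndepOn ℤ ξ (J : Set (Fin t)))
    (hmax : ∀ (κ' : Type) [Field κ'] (y' : Fin t → κ') (J' : Finset (Fin t)),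
      (∀ i, aeval y' (f i) = 0) → AlgebraicIndepOn ℤ y' (J' : Set (Fin t)) → J'.card ≤ J.card)
    (Q : Ideal (MvPolynomial (Fin t) Ω)) (hQ : Q.IsPrime)
    (hf : ∀ j, map (algebraMap ℤ Ω) (f j) ∈ Q)
    (hQJ : ∀ i ∈ J, X i - C (ξ i) ∈ Q) (hle : Q ≤ pointIdeal ξ) : Q = pointIdeal ξ := by
  classical
  obtain ⟨κ, _, π, hπ⟩ : ∃ (κ : Type) (_ : Field κ) (π : MvPolynomial (Fin t) Ω →+* κ),
      ∀ F, π F = 0 ↔ F ∈ Q := by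
    refine ⟨FractionRing (MvPolynomial (Fin t) Ω ⧸ Q), inferInstance,
      (algebraMap _ _).comp (Ideal.Quotient.mk Q), fun F => ?_⟩
    rw [RingHom.comp_apply, FaithfulSMul.algebraMap_eq_zero_iff, Ideal.Quotient.eq_zero_iff_mem]
  let _ : Algebra Ω κ := (π.comp C).toAlgebra
  have halg : ∀ c, algebraMap Ω κ c = π (C c) := fun c => rfl
  let y : Fin t → κ := fun i => π (X i)
  have hyJ : ∀ i ∈ J, y i = algebraMap Ω κ (ξ i) := by
    intro i hi
    rw [halg, ← sub_eq_zero, ← map_sub]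
    exact (hπ _).mpr (hQJ i hi)
  have hy : ∀ i, aeval y (f i) = 0 := by
    intro i
    have h1 : (aeval y : MvPolynomial (Fin t) ℤ →ₐ[ℤ] κ).toRingHom =
        π.comp (map (algebraMap ℤ Ω)) := by
      apply MvPolynomial.ringHom_ext <;> intro r <;> simp [y]
    exact (DFunLike.congr_fun h1 (f i)).trans ((hπ _).mpr (hf i))
  have hyind : AlgebraicIndepOn ℤ y (J : Set (Fin t)) := by
    have h1 := AlgebraicIndependent.map' (f := (algebraMap Ω κ).toIntAlgHom) hJ
      (algebraMap Ω κ).injective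
    rw [AlgebraicIndepOn]
    convert h1 using 1
    ext i
    exact hyJ i i.2
  have hmem : ∀ i, X i - C (ξ i) ∈ Q := by
    intro i
    by_cases hi : i ∈ J
    · exact hQJ i hi
    have h1 : y i ∈ Set.range (algebraMap Ω κ) := by
      refine mem_range_of_isAlgebraic (S := Algebra.adjoin ℤ (y '' (J : Set (Fin t)))) ?_ (y i) ?_
      · intro c
        have : Algebra.adjoin ℤ (y '' (J : Set (Fin t))) ≤ (algebraMap Ω κ).toIntAlgHom.range := by
          refine Algebra.adjoin_le ?_
          rintro _ ⟨k, hk, rfl⟩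
          exact ⟨ξ k, (hyJ k hk).symm⟩
        exact this c.2
      · by_contra htr
        have h2 := (AlgebraicIndepOn.insert_iff (R := ℤ) (x := y) (s := (J : Set (Fin t)))
          (by simpa using hi)).mpr ⟨hyind, htr⟩
        rw [← Finset.coe_insert] at h2
        have := hmax κ y _ hy h2
        rw [Finset.card_insert_of_notMem hi] at this
        omega
    obtain ⟨c, hc⟩ := h1
    have h2 : X i - C c ∈ Q := by
      rw [← hπ, map_sub, sub_eq_zero]
      exact hc.symm
    have h3 := mem_pointIdeal.mp (hle h2)
    simp only [map_sub, aeval_X, algHom_C, Algebra.algebraMap_self, RingHom.id_apply, sub_eq_zero] at h3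
    rwa [h3]
  exact le_antisymm hle (pointIdeal_le hmem)

end maximal

/-! ### Reduction modulo a prime -/

section reduction
variable {s t : ℕ}

/-- The Nullstellensatz over `ZMod p`. -/
theorem exists_zero_of_span_ne_top (p : ℕ) [Fact p.Prime] (f : Fin s → MvPolynomial (Fin t) ℤ)
    (h : Ideal.span (Set.range fun i => map (Int.castRingHom (ZMod p)) (f i)) ≠ ⊤) :
    ∃ x : Fin t → AlgebraicClosure (ZMod p), ∀ i, aeval x (f i) = 0 := by
  obtain ⟨m, hm, hle⟩ := Ideal.exists_le_maximal _ h
  let _ : Field (MvPolynomial (Fin t) (ZMod p) ⧸ m) := Ideal.Quotient.field m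
  have hfin : Module.Finite (ZMod p) (MvPolynomial (Fin t) (ZMod p) ⧸ m) :=
    finite_of_finite_type_of_isJacobsonRing (ZMod p) _
  let ψ : (MvPolynomial (Fin t) (ZMod p) ⧸ m) →ₐ[ZMod p] AlgebraicClosure (ZMod p) :=
    IsAlgClosed.lift
  refine ⟨fun i => ψ (Ideal.Quotient.mk m (X i)), fun i => ?_⟩
  have h1 : (aeval fun i => ψ (Ideal.Quotient.mk m (X i)) :
      MvPolynomial (Fin t) ℤ →ₐ[ℤ] AlgebraicClosure (ZMod p)).toRingHom =
      (ψ.toRingHom.comp (Ideal.Quotient.mk m)).comp (map (Int.castRingHom (ZMod p))) := by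
    apply MvPolynomial.ringHom_ext <;> intro r <;> simp
  refine (DFunLike.congr_fun h1 (f i)).trans ?_
  simp only [RingHom.comp_apply]
  rw [Ideal.Quotient.eq_zero_iff_mem.mpr (hle (Ideal.subset_span ⟨i, rfl⟩)), map_zero]

theorem span_ne_top_of_zero {p : ℕ} [Fact p.Prime] (f : Fin s → MvPolynomial (Fin t) ℤ)
    {k : Type*} [Field k] (hk : (p : k) = 0) (x : Fin t → k) (hx : ∀ i, aeval x (f i) = 0) :
    Ideal.span (Set.range fun i => map (Int.castRingHom (ZMod p)) (f i)) ≠ ⊤ := by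
  have : CharP k p := (CharP.charP_iff_prime_eq_zero Fact.out).mpr hk
  let e : MvPolynomial (Fin t) (ZMod p) →+* k := eval₂Hom (ZMod.castHom dvd_rfl k) x
  have hle : Ideal.span (Set.range fun i => map (Int.castRingHom (ZMod p)) (f i)) ≤
      RingHom.ker e := by
    rw [Ideal.span_le]
    rintro _ ⟨i, rfl⟩
    have h1 : (aeval x : MvPolynomial (Fin t) ℤ →ₐ[ℤ] k).toRingHom =
        e.comp (map (Int.castRingHom (ZMod p))) := by
      apply MvPolynomial.ringHom_ext <;> intro r <;> simp [e]
    exact (DFunLike.congr_fun h1 (f i)).symm.trans (hx i)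
  exact fun h => RingHom.ker_ne_top e (top_le_iff.mp (h ▸ hle))

/-- A root of a polynomial over a valuation ring whose leading coefficient is a unit lies in the
valuation ring. -/
theorem mem_of_leadingCoeff_isUnit {R Ω : Type*} [CommRing R] [Field Ω] (A : ValuationSubring Ω)
    (ρ : R →+* A) (F : Polynomial R) (hF : IsUnit (ρ F.leadingCoeff)) {ξ : Ω}
    (h0 : F.eval₂ ((algebraMap A Ω).comp ρ) ξ = 0) : ξ ∈ A := by
  have h1 : ((algebraMap A Ω).comp ρ).IsIntegralElem
      (((algebraMap A Ω).comp ρ) F.leadingCoeff * ξ) :=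
    RingHom.isIntegralElem_leadingCoeff_mul _ F ξ h0
  obtain ⟨P, hP, hP0⟩ := h1
  have h2 : IsIntegral A (algebraMap A Ω (ρ F.leadingCoeff) * ξ) :=
    ⟨P.map ρ, hP.map ρ, by rw [Polynomial.eval₂_map]; exact hP0⟩
  obtain ⟨a, ha⟩ := IsIntegrallyClosed.isIntegral_iff.mp h2
  obtain ⟨u, hu⟩ := hF
  have h3 : ξ = algebraMap A Ω (↑u⁻¹ * a) := by
    rw [map_mul, ha, ← hu, ← mul_assoc, ← map_mul, Units.inv_mul, map_one, one_mul]
  rw [h3]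
  exact (↑u⁻¹ * a : A).2

/-- Reduction modulo `p` of a zero `ξ` in an extension `Ω` of the function field of `ℤ[z]`. The
localization of `ℤ[z]` at the prime `(p)` is dominated by a valuation ring of `Ω`. The leading
coefficients of the relations are units there, so the coordinates of `ξ` belong to the valuation
ring and can be reduced to its residue field, which has characteristic `p`. -/
theorem span_ne_top_of_relations {p : ℕ} [hp : Fact p.Prime] (f : Fin s → MvPolynomial (Fin t) ℤ)
    {σ Ω : Type*} [Field Ω] (φ : MvPolynomial σ ℤ →+* Ω) (hφ : Function.Injective φ)
    (ξ : Fin t → Ω) (hξ : ∀ i, aeval ξ (f i) = 0)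
    (F : Fin t → Polynomial (MvPolynomial σ ℤ)) (hF : ∀ j, (F j).eval₂ φ (ξ j) = 0)
    (hlead : ∀ j, ∃ m, ¬ (p : ℤ) ∣ (F j).leadingCoeff.coeff m) :
    Ideal.span (Set.range fun i => map (Int.castRingHom (ZMod p)) (f i)) ≠ ⊤ := by
  let P : Ideal (MvPolynomial σ ℤ) := Ideal.span {C (p : ℤ)}
  have hmem : ∀ c, c ∈ P ↔ ∀ m, (p : ℤ) ∣ c.coeff m := fun c => by
    rw [Ideal.mem_span_singleton, C_dvd_iff_dvd_coeff]
  have hP : P.IsPrime := by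
    refine (Ideal.span_singleton_prime ?_).mpr ?_
    · simpa using hp.out.ne_zero
    · exact (prime_C_iff σ).mpr (Nat.prime_iff_prime_int.mp hp.out)
  have hunit : ∀ y : P.primeCompl, IsUnit (φ y) := fun y => by
    refine isUnit_iff_ne_zero.mpr fun h => y.2 ?_
    rw [(map_eq_zero_iff φ hφ).mp h]
    exact P.zero_mem
  let ψ : Localization.AtPrime P →+* Ω := IsLocalization.lift hunit
  obtain ⟨A, hA, hloc⟩ := IsLocalRing.exists_factor_valuationRing ψ
  let ρ : MvPolynomial σ ℤ →+* A :=
    (ψ.codRestrict A.toSubring hA).comp (algebraMap _ (Localization.AtPrime P))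
  have hρ : (algebraMap A Ω).comp ρ = φ := by
    refine RingHom.ext fun c => ?_
    exact IsLocalization.lift_eq hunit c
  have hρunit : ∀ c, IsUnit (ρ c) ↔ c ∉ P := fun c => by
    refine Iff.trans ⟨fun h => hloc.map_nonunit _ h, fun h =>
      h.map (ψ.codRestrict A.toSubring hA)⟩
      (IsLocalization.AtPrime.isUnit_to_map_iff (Localization.AtPrime P) P c)
  have hξA : ∀ j, ξ j ∈ A := fun j => by
    refine mem_of_leadingCoeff_isUnit A ρ (F j) ((hρunit _).mpr fun h => ?_) (by rw [hρ, hF])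
    obtain ⟨m, hm⟩ := hlead j
    exact hm ((hmem _).mp h m)
  let x : Fin t → A := fun j => ⟨ξ j, hξA j⟩
  have hx : ∀ i, aeval x (f i) = 0 := fun i => by
    have h1 : (aeval ξ : MvPolynomial (Fin t) ℤ →ₐ[ℤ] Ω).toRingHom =
        (algebraMap A Ω).comp (aeval x : MvPolynomial (Fin t) ℤ →ₐ[ℤ] A).toRingHom := by
      apply MvPolynomial.ringHom_ext
      · intro r; simp
      · intro j; simp [x]
    apply IsFractionRing.injective A Ω
    rw [map_zero, ← hξ i]
    exact (DFunLike.congr_fun h1 (f i)).symm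
  refine span_ne_top_of_zero f (k := IsLocalRing.ResidueField A) ?_
    (fun j => IsLocalRing.residue A (x j)) fun i => ?_
  · have h1 : (p : IsLocalRing.ResidueField A) = IsLocalRing.residue A (ρ (C (p : ℤ))) := by
      simp
    rw [h1, IsLocalRing.residue_eq_zero_iff, IsLocalRing.mem_maximalIdeal, mem_nonunits_iff, hρunit,
      not_not]
    exact Ideal.mem_span_singleton_self _
  · have h1 : (aeval (fun j => IsLocalRing.residue A (x j)) :
        MvPolynomial (Fin t) ℤ →ₐ[ℤ] IsLocalRing.ResidueField A).toRingHom =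
        (IsLocalRing.residue A).comp (aeval x : MvPolynomial (Fin t) ℤ →ₐ[ℤ] A).toRingHom := by
      apply MvPolynomial.ringHom_ext <;> intro r <;> simp
    refine (DFunLike.congr_fun h1 (f i)).trans ?_
    refine (congrArg (IsLocalRing.residue A) (hx i)).trans (map_zero _)

/-- A single nonconstant polynomial with coefficients smaller than `p` remains nonconstant
modulo `p`, so it is not a unit. -/
theorem span_ne_top_of_single {p H : ℕ} [Fact p.Prime] (f : Fin 1 → MvPolynomial (Fin t) ℤ)
    (hdeg : 1 ≤ (f 0).totalDegree) (hH : ∀ m, |(f 0).coeff m| ≤ (H : ℤ)) (hp : H < p) :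
    Ideal.span (Set.range fun i => map (Int.castRingHom (ZMod p)) (f i)) ≠ ⊤ := by
  rw [Set.range_unique, Ne, Ideal.span_singleton_eq_top]
  intro h
  have h0 := (isUnit_iff_totalDegree_of_isReduced.mp h).2
  rw [totalDegree_eq_zero_iff] at h0
  have : (f 0).totalDegree ≠ 0 := by omega
  rw [Ne, totalDegree_eq_zero_iff] at this
  push Not at this
  obtain ⟨m, hm, j, hj⟩ := this
  refine hj (h0 m ?_ j)
  rw [mem_support_iff, coeff_map]
  intro h1
  have h2 : (p : ℤ) ∣ (f 0).coeff m := (ZMod.intCast_zmod_eq_zero_iff_dvd _ p).mp h1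
  refine mem_support_iff.mp hm (Int.eq_zero_of_abs_lt_dvd h2 ?_)
  exact (hH m).trans_lt (by exact_mod_cast hp)

end reduction

/-! ### The square system attached to a zero, and numerical estimates -/

section assembly
variable {s t : ℕ}

/-- Every field embeds in an algebraically closed one that contains infinitely many independent
transcendentals over it. -/
theorem exists_generic_field (κ : Type) [Field κ] :
    ∃ (Ω : Type) (_ : Field Ω) (_ : IsAlgClosed Ω) (_ : Algebra κ Ω) (Y : ℕ → Ω),
      AlgebraicIndependent κ Y := by
  refine ⟨AlgebraicClosure (FractionRing (MvPolynomial ℕ κ)), inferInstance, inferInstance,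
    inferInstance, fun n => algebraMap (MvPolynomial ℕ κ) _ (X n), ?_⟩
  refine AlgebraicIndependent.map' (f := IsScalarTower.toAlgHom κ (MvPolynomial ℕ κ)
    (AlgebraicClosure (FractionRing (MvPolynomial ℕ κ)))) (algebraicIndependent_X ℕ κ) ?_
  change Function.Injective (algebraMap (MvPolynomial ℕ κ) _)
  rw [IsScalarTower.algebraMap_eq (MvPolynomial ℕ κ) (FractionRing (MvPolynomial ℕ κ))
    (AlgebraicClosure (FractionRing (MvPolynomial ℕ κ)))]
  rw [RingHom.coe_comp]
  exact (algebraMap (FractionRing (MvPolynomial ℕ κ)) _).injective.comp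
    (IsFractionRing.injective (MvPolynomial ℕ κ) (FractionRing (MvPolynomial ℕ κ)))

/-- The square system `x i = z i` for `i ∈ J`, and `∑ z i ^ j * f j = 0` for `i ∉ J`, with
indeterminate parameters `z`: the inner polynomial ring is `ℤ[z]`, and the outer one has the unknowns
`x`. -/
noncomputable def sliceSystem (f : Fin s → MvPolynomial (Fin t) ℤ) (J : Finset (Fin t)) (i : Fin t) :
    MvPolynomial (Fin t) (MvPolynomial (Fin t) ℤ) :=
  if i ∈ J then X i - C (X i) else ∑ j : Fin s, C (X i ^ (j : ℕ)) * map C (f j)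

theorem totalDegree_sliceSystem_le {d : ℕ} (hd : 1 ≤ d) (f : Fin s → MvPolynomial (Fin t) ℤ)
    (hdeg : ∀ i, (f i).totalDegree ≤ d) (J : Finset (Fin t)) (i : Fin t) :
    (sliceSystem f J i).totalDegree ≤ d := by
  unfold sliceSystem
  split_ifs
  · refine (totalDegree_sub_C_le _ _).trans ?_
    rwa [totalDegree_X]
  · refine totalDegree_finsetSum_le fun j _ => ?_
    refine (totalDegree_mul _ _).trans ?_
    rw [totalDegree_C, zero_add]
    refine (Finset.sup_mono ?_).trans (hdeg j)
    exact support_map_subset _ _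

theorem coeffNorm_sliceSystem_le {H : ℕ} (hs : 2 ≤ s) (hH1 : 1 ≤ H)
    (f : Fin s → MvPolynomial (Fin t) ℤ) (hH : ∀ i m, |(f i).coeff m| ≤ (H : ℤ))
    (J : Finset (Fin t)) (i : Fin t) (β : Fin t →₀ ℕ) :
    coeffNorm ((sliceSystem f J i).coeff β) ≤ s * H := by
  classical
  unfold sliceSystem
  split_ifs
  · rw [coeff_sub, sub_eq_add_neg, coeff_X, coeff_C]
    refine (coeffNorm_add_le _ _).trans ?_
    rw [coeffNorm_neg]
    have h1 : coeffNorm (if Finsupp.single i 1 = β then (1 : MvPolynomial (Fin t) ℤ) else 0) ≤ 1 := by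
      split_ifs <;> simp [coeffNorm_one, coeffNorm_zero]
    have h2 : coeffNorm (if 0 = β then (X i : MvPolynomial (Fin t) ℤ) else 0) ≤ 1 := by
      split_ifs <;> simp [coeffNorm_X, coeffNorm_zero]
    nlinarith
  · rw [coeff_sum]
    refine (coeffNorm_sum_le _ _).trans ?_
    refine (Finset.sum_le_card_nsmul _ _ H fun j _ => ?_).trans (by simp)
    rw [coeff_C_mul, coeff_map]
    refine (coeffNorm_mul_le _ _).trans ?_
    rw [coeffNorm_C]
    have h1 : ((f j).coeff β).natAbs ≤ H := by
      have := hH j β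
      rw [Int.abs_eq_natAbs] at this
      omega
    calc _ ≤ 1 * H := Nat.mul_le_mul (coeffNorm_X_pow _ _).le h1
      _ = H := one_mul H

theorem map_sliceSystem_of_mem (f : Fin s → MvPolynomial (Fin t) ℤ) {J : Finset (Fin t)}
    {Ω : Type*} [Field Ω] (z : Fin t → Ω) {i : Fin t} (hi : i ∈ J) :
    map (aeval z : MvPolynomial (Fin t) ℤ →ₐ[ℤ] Ω).toRingHom (sliceSystem f J i) =
      X i - C (z i) := by
  simp [sliceSystem, hi]

theorem map_sliceSystem_of_notMem (f : Fin s → MvPolynomial (Fin t) ℤ) {J : Finset (Fin t)}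
    {Ω : Type*} [Field Ω] (z : Fin t → Ω) {i : Fin t} (hi : i ∉ J) :
    map (aeval z : MvPolynomial (Fin t) ℤ →ₐ[ℤ] Ω).toRingHom (sliceSystem f J i) =
      ∑ j : Fin s, C (z i ^ (j : ℕ)) * map (algebraMap ℤ Ω) (f j) := by
  have h : (aeval z : MvPolynomial (Fin t) ℤ →ₐ[ℤ] Ω).toRingHom.comp C = algebraMap ℤ Ω :=
    RingHom.ext_int _ _
  simp only [sliceSystem, hi, if_false, map_sum, map_mul, map_C, map_pow, map_map, h]
  simp

/-- A zero `ξ` of `f` whose coordinates satisfy nonzero relations over a polynomial ring `ℤ[z]`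
embedded in the field, with explicitly bounded integer coefficients. -/
theorem exists_relations {d H : ℕ} (hs : 2 ≤ s) (hd : 1 ≤ d) (hH1 : 1 ≤ H)
    (f : Fin s → MvPolynomial (Fin t) ℤ) (hdeg : ∀ i, (f i).totalDegree ≤ d)
    (hH : ∀ i m, |(f i).coeff m| ≤ (H : ℤ))
    (hzero : ∃ x : Fin t → ℂ, ∀ i, aeval x (f i) = 0) :
    ∃ (Ω : Type) (_ : Field Ω) (φ : MvPolynomial (Fin t) ℤ →+* Ω) (ξ : Fin t → Ω),
      Function.Injective φ ∧ (∀ i, aeval ξ (f i) = 0) ∧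
      ∀ j, ∃ F : Polynomial (MvPolynomial (Fin t) ℤ), F ≠ 0 ∧ F.eval₂ φ (ξ j) = 0 ∧
        ∀ k m, ((F.coeff k).coeff m).natAbs ≤
          2 * (1 + (expSet t (t * (d - 1) + 1)).card * (s * H)) ^
            ((expSet t (t * (d - 1) + 1)).card - 1) := by
  classical
  obtain ⟨κ, _, y, J, hy, hyJ, hmax⟩ := exists_max_zero f hzero
  obtain ⟨Ω, _, _, _, Y, hY⟩ := exists_generic_field κ
  let ξ : Fin t → Ω := fun i => algebraMap κ Ω (y i)
  have hξ : ∀ i, aeval ξ (f i) = 0 := by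
    intro i
    have := aeval_algebraMap_apply Ω y (f i)
    rw [hy, map_zero] at this
    exact this
  have hξJ : AlgebraicIndepOn ℤ ξ (J : Set (Fin t)) :=
    AlgebraicIndependent.map' (f := (algebraMap κ Ω).toIntAlgHom) hyJ (algebraMap κ Ω).injective
  have hfξ : ∀ j, map (algebraMap ℤ Ω) (f j) ∈ pointIdeal ξ := fun j => by
    rw [mem_pointIdeal, aeval_map_algebraMap, hξ]
  obtain ⟨n, hn, hiso⟩ := exists_generic_combinations (fun j => map (algebraMap ℤ Ω) (f j)) ξ J Y
    hY.injective (isolated_of_max f ξ J hξJ hmax)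
  let z : Fin t → Ω := fun i => if i ∈ J then ξ i else Y (n i)
  have hz : AlgebraicIndependent ℤ z := by
    let e : Fin t → ℕ ⊕ (J : Set (Fin t)) := fun i =>
      if h : i ∈ J then Sum.inr ⟨i, h⟩ else Sum.inl (n i)
    have he : Function.Injective e := by
      intro i k hik
      by_cases hi : i ∈ J <;> by_cases hk : k ∈ J <;> simp only [e, hi, hk, dite_true, dite_false,
        Sum.inr.injEq, Sum.inl.injEq, Subtype.mk.injEq, reduceCtorEq] at hik
      · exact hik
      · exact hn hi hk hik
    have h1 := (AlgebraicIndependent.sumElim_comp (R := ℤ) hyJ hY).comp e he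
    convert h1 using 1
    funext i
    by_cases hi : i ∈ J <;> simp [z, e, hi, ξ]
  refine ⟨Ω, inferInstance, (aeval z : MvPolynomial (Fin t) ℤ →ₐ[ℤ] Ω).toRingHom, ξ, hz, hξ, ?_⟩
  have hzJ : ∀ i ∈ J, z i = ξ i := fun i hi => if_pos hi
  have hzJ' : ∀ i, i ∉ J → z i = Y (n i) := fun i hi => if_neg hi
  refine fun j => exists_relation hd (sliceSystem f J) (totalDegree_sliceSystem_le hd f hdeg J)
    (by nlinarith) (coeffNorm_sliceSystem_le hs hH1 f hH J) _ ξ (fun i => ?_)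
    (fun Q hQ hgQ hle => hiso Q hQ (fun i hi => ?_) (fun i hi => ?_) hle) j
  · by_cases hi : i ∈ J
    · rw [map_sliceSystem_of_mem f z hi, hzJ i hi, mem_pointIdeal]
      simp
    · rw [map_sliceSystem_of_notMem f z hi]
      exact Ideal.sum_mem _ fun j _ => Ideal.mul_mem_left _ _ (hfξ j)
  · have := hgQ i
    rwa [map_sliceSystem_of_mem f z hi, hzJ i hi] at this
  · have := hgQ i
    rwa [map_sliceSystem_of_notMem f z hi, hzJ' i hi] at this

/-- A form of Bernoulli's inequality for `(1 - 1 / (1 + y)) ^ (n + 1)`. -/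
theorem one_add_pow_mul_le (y : ℤ) (hy : 0 ≤ y) (n : ℕ) : (1 + y) ^ n * (y - n) ≤ y ^ (n + 1) := by
  induction n with
  | zero => simp
  | succ n ih =>
    calc (1 + y) ^ (n + 1) * (y - (n + 1 : ℕ))
        = (1 + y) ^ n * (y * (y - n)) - (1 + y) ^ n * (n + 1) := by push_cast; ring
      _ ≤ (1 + y) ^ n * (y * (y - n)) := sub_le_self _ (by positivity)
      _ = y * ((1 + y) ^ n * (y - n)) := by ring
      _ ≤ y * y ^ (n + 1) := mul_le_mul_of_nonneg_left ih hy
      _ = y ^ (n + 1 + 1) := by ring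

theorem two_mul_one_add_pow_le {y N : ℕ} (hN : 1 ≤ N) (hy : 2 * N ≤ y) :
    2 * (1 + y) ^ (N - 1) ≤ y ^ N := by
  obtain ⟨n, rfl⟩ : ∃ n, N = n + 1 := ⟨N - 1, by omega⟩
  rw [Nat.add_sub_cancel]
  have h := one_add_pow_mul_le y (Int.natCast_nonneg y) n
  have h2 : (1 + (y : ℤ)) ^ n * 2 ≤ (1 + (y : ℤ)) ^ n * (y - n) :=
    mul_le_mul_of_nonneg_left (by omega) (by positivity)
  zify
  linarith

/-- The bound of `exists_relations` is at most `H ^ L * √L ^ L` for `L = s * M`, where `N` is the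
number of monomials of the elimination matrix. As `2 * N ≤ L`, it is at most
`(H * L) ^ N`, whose square is at most `(H * L) ^ L`. -/
theorem bound_le {N M H : ℕ} (hN : 1 ≤ N) (hNM : N ≤ M) (hs : 2 ≤ s) (hH : 1 ≤ H) :
    ((2 * (1 + N * (s * H)) ^ (N - 1) : ℕ) : ℝ) ≤
      (H : ℝ) ^ (s * M) * Real.sqrt (s * M : ℕ) ^ (s * M) := by
  set L := s * M with hL
  have hNL : 2 * N ≤ L := Nat.mul_le_mul hs hNM
  have h1 : 2 * (1 + N * (s * H)) ^ (N - 1) ≤ (H * L) ^ N := by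
    refine (two_mul_one_add_pow_le hN ?_).trans (Nat.pow_le_pow_left ?_ N)
    · calc 2 * N = N * (2 * 1) := by ring
        _ ≤ N * (s * H) := Nat.mul_le_mul_left _ (Nat.mul_le_mul hs hH)
    rw [hL]
    calc N * (s * H) ≤ M * (s * H) := Nat.mul_le_mul_right _ hNM
      _ = H * (s * M) := by ring
  have h2 : (H * L) ^ (N * 2) ≤ (H * L) ^ L :=
    Nat.pow_le_pow_right (by nlinarith) (by omega)
  have h3 : (H * L) ^ L ≤ (H ^ L) ^ 2 * L ^ L := by
    rw [mul_pow]
    exact Nat.mul_le_mul_right _ (Nat.le_self_pow two_ne_zero _)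
  refine (Nat.cast_le.mpr h1).trans (le_of_sq_le_sq ?_ (by positivity))
  have h4 : ((H : ℝ) ^ L * Real.sqrt L ^ L) ^ 2 = (((H ^ L) ^ 2 * L ^ L : ℕ) : ℝ) := by
    rw [mul_pow, ← pow_mul (Real.sqrt L), mul_comm L 2, pow_mul (Real.sqrt L), Real.sq_sqrt (Nat.cast_nonneg _)]
    push_cast
    ring
  rw [h4, ← Nat.cast_pow, ← pow_mul]
  exact Nat.cast_le.mpr (h2.trans h3)

/-- Bernoulli's inequality, comparing the degree used for elimination with `d ^ t`. -/
theorem exponent_le {d : ℕ} (hd : 1 ≤ d) : t * (d - 1) + 1 ≤ d ^ t := by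
  obtain ⟨e, rfl⟩ : ∃ e, d = e + 1 := ⟨d - 1, by omega⟩
  rw [Nat.add_sub_cancel]
  have := one_add_mul_le_pow (a := (e : ℤ)) (by omega) t
  zify
  linarith [add_comm (1 : ℤ) e ▸ this]

end assembly

end

theorem common_zero_mod_large_primes
    (s t d H : ℕ) (f : Fin s → MvPolynomial (Fin t) ℤ)
    (hdeg : ∀ i, 1 ≤ (f i).totalDegree ∧ (f i).totalDegree ≤ d)
    (hH : ∀ i m, |(f i).coeff m| ≤ (H : ℤ))
    (hzero : ∃ x : Fin t → ℂ, ∀ i, MvPolynomial.aeval x (f i) = 0)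
    (L : ℕ) (hL : L = s * (d ^ t + t).choose t)
    (p : ℕ) [Fact p.Prime]
    (hp : (H : ℝ) ^ L * Real.sqrt L ^ L < (p : ℝ)) :
    ∃ x : Fin t → AlgebraicClosure (ZMod p),
      ∀ i, MvPolynomial.aeval x (f i) = 0 := by
  subst hL
  rcases Nat.eq_zero_or_pos s with rfl | hs
  · exact ⟨0, fun i => i.elim0⟩
  have hd : 1 ≤ d := (hdeg ⟨0, hs⟩).1.trans (hdeg ⟨0, hs⟩).2
  have hM : 1 ≤ (d ^ t + t).choose t := Nat.choose_pos (Nat.le_add_left _ _)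
  have hH1 : 1 ≤ H := by
    have h0 : f ⟨0, hs⟩ ≠ 0 := by
      intro h
      have := (hdeg ⟨0, hs⟩).1
      rw [h, MvPolynomial.totalDegree_zero] at this
      omega
    obtain ⟨m, hm⟩ := MvPolynomial.ne_zero_iff.mp h0
    have := (abs_pos.mpr hm).trans_le (hH ⟨0, hs⟩ m)
    omega
  refine exists_zero_of_span_ne_top p f ?_
  rcases Nat.lt_or_ge s 2 with hs2 | hs2
  · obtain rfl : s = 1 := by omega
    refine span_ne_top_of_single f (hdeg 0).1 (hH 0) ?_
    have hL1 : 1 ≤ 1 * (d ^ t + t).choose t := by omega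
    have hH' : (1 : ℝ) ≤ H := by exact_mod_cast hH1
    have h1 : (1 : ℝ) ≤ Real.sqrt (1 * (d ^ t + t).choose t : ℕ) :=
      Real.one_le_sqrt.mpr (by exact_mod_cast hL1)
    have h2 : (H : ℝ) < p := by
      refine lt_of_le_of_lt ?_ hp
      calc (H : ℝ) = H * 1 := (mul_one _).symm
        _ ≤ _ := mul_le_mul (le_self_pow₀ hH' (by omega)) (one_le_pow₀ h1) zero_le_one
          (by positivity)
    exact_mod_cast h2
  obtain ⟨Ω, _, φ, ξ, hφ, hξ, hF⟩ := exists_relations hs2 hd hH1 f (fun i => (hdeg i).2) hH hzero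
  choose F hF0 hFξ hFb using hF
  refine span_ne_top_of_relations f φ hφ ξ hξ F hFξ fun j => ?_
  obtain ⟨m, hm⟩ := MvPolynomial.ne_zero_iff.mp (Polynomial.leadingCoeff_ne_zero.mpr (hF0 j))
  refine ⟨m, fun hdvd => hm (Int.eq_zero_of_abs_lt_dvd hdvd ?_)⟩
  have hN1 : 1 ≤ (expSet t (t * (d - 1) + 1)).card :=
    Finset.card_pos.mpr ⟨0, mem_expSet.mpr (by simp)⟩
  have hNM : (expSet t (t * (d - 1) + 1)).card ≤ (d ^ t + t).choose t :=
    (card_expSet_le _ _).trans (Nat.choose_le_choose _ (Nat.add_le_add_right (exponent_le hd) t))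
  have h1 : (((F j).leadingCoeff.coeff m).natAbs : ℝ) < p :=
    lt_of_le_of_lt ((Nat.cast_le.mpr (hFb j _ m)).trans (bound_le hN1 hNM hs2 hH1)) hp
  have h2 : ((F j).leadingCoeff.coeff m).natAbs < p := by exact_mod_cast h1
  rw [Int.abs_eq_natAbs]
  omega
end
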